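/- arXiv:1211.5755 — 2 statements merged into one kernel-verified Lean document; each statement's English description precedes it below -/
import Mathlib

section
/- Let G be a connected simple graph on {1,…,d} that does not satisfy the odd cycle condition, and let P_G be its edge polytope. Then μ_va(P_G) = μ_Hilb(P_G) = max{ (ℓ(C)+ℓ(C'))/2 : (C,C') an exceptional pair of minimal odd cycles in G }, where ℓ denotes cycle length. -/
open scoped BigOperators Pointwise

/-- Points of `ℝ^N`. -/
abbrev Pt (N : ℕ) := Fin N → ℝ

/-- A point has integer coordinates. -/
def IsLat {N : ℕ} (x : Pt N) : Prop := ∀ i, ∃ z : ℤ, x i = (z : ℝ)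

/-- Lattice points of a set. -/
def latPts {N : ℕ} (P : Set (Pt N)) : Set (Pt N) := {x ∈ P | IsLat x}

/-- The dilated polytope `kP`. -/
def dil {N : ℕ} (k : ℕ) (P : Set (Pt N)) : Set (Pt N) := (k : ℝ) • P

/-- `α` is a sum of `k` lattice points of `P`. -/
def DecomposesIn {N : ℕ} (P : Set (Pt N)) (k : ℕ) (α : Pt N) : Prop :=
  ∃ f : Fin k → Pt N, (∀ i, f i ∈ latPts P) ∧ α = ∑ i, f i

/-- The integer decomposition property. -/
def HasIDP {N : ℕ} (P : Set (Pt N)) : Prop :=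
  ∀ k : ℕ, 0 < k → ∀ α ∈ latPts (dil k P), DecomposesIn P k α

/-- Very ampleness: decomposition holds for all sufficiently large `k`. -/
def VeryAmple {N : ℕ} (P : Set (Pt N)) : Prop :=
  ∃ k₀ : ℕ, ∀ k, k₀ ≤ k → ∀ α ∈ latPts (dil k P), DecomposesIn P k α

/-- An integral convex polytope: the convex hull of finitely many lattice points
(which include all its vertices). -/
def IsIntegralPolytope {N : ℕ} (P : Set (Pt N)) : Prop :=
  ∃ V : Finset (Pt N), (∀ v ∈ V, IsLat v) ∧ P = convexHull ℝ (V : Set (Pt N))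

/-- Dimension of a polytope: the rank of the direction of its affine span. -/
noncomputable def polyDim {N : ℕ} (P : Set (Pt N)) : ℕ :=
  Module.finrank ℝ (affineSpan ℝ P).direction

/-- Lattice points of the cone `C(P) ⊂ ℝ^{N+1}` generated by `P̃ = P × {1}`;
a point of `ℝ^{N+1}` is represented as a pair `(x, deg)`. -/
def coneLat {N : ℕ} (P : Set (Pt N)) : Set (Pt N × ℝ) :=
  {p | (∃ (m : ℕ) (c : Fin m → ℝ) (w : Fin m → Pt N),
        (∀ i, 0 ≤ c i ∧ w i ∈ P) ∧ p.1 = ∑ i, c i • w i ∧ p.2 = ∑ i, c i)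
    ∧ IsLat p.1 ∧ ∃ z : ℤ, p.2 = (z : ℝ)}

/-- The monoid `ℤ_{≥0}(P̃ ∩ ℤ^{N+1})` generated by the degree-one lattice points of the cone. -/
def genMonoid {N : ℕ} (P : Set (Pt N)) : Set (Pt N × ℝ) :=
  {p | ∃ (m : ℕ) (f : Fin m → Pt N), (∀ i, f i ∈ latPts P) ∧
        p.1 = ∑ i, f i ∧ p.2 = (m : ℝ)}

/-- `H` is the minimal Hilbert basis of the cone `C(P)`. -/
def IsMinHilbertBasis {N : ℕ} (P : Set (Pt N)) (H : Set (Pt N × ℝ)) : Prop :=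
  (H.Finite ∧ H ⊆ coneLat P ∧
      coneLat P ⊆ (AddSubmonoid.closure H : Set (Pt N × ℝ))) ∧
  ∀ H' : Set (Pt N × ℝ),
    (H'.Finite ∧ H' ⊆ coneLat P ∧
      coneLat P ⊆ (AddSubmonoid.closure H' : Set (Pt N × ℝ))) → H ⊆ H'

/-- `v` lists the vertices of an empty `d`-simplex contained in `P`. -/
def EmptySimplexIn {N : ℕ} (P : Set (Pt N)) (d : ℕ) (v : Fin (d+1) → Pt N) : Prop :=
  (∀ i, v i ∈ latPts P) ∧ AffineIndependent ℝ v ∧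
    ∀ x ∈ convexHull ℝ (Set.range v), IsLat x → x ∈ Set.range v

/-- `Box(S)` of a simplex with vertex list `v`: lattice points
`Σ rᵢ (vᵢ, 1)` with `0 ≤ rᵢ < 1`. -/
def boxSimplex {N d : ℕ} (v : Fin (d+1) → Pt N) : Set (Pt N × ℝ) :=
  {p | ∃ r : Fin (d+1) → ℝ, (∀ i, 0 ≤ r i ∧ r i < 1) ∧
      p.1 = ∑ i, r i • v i ∧ p.2 = ∑ i, r i ∧ IsLat p.1 ∧ ∃ z : ℤ, p.2 = (z : ℝ)}

/-- `Box(P)`: holes of `P`, i.e. box points of empty `d`-simplices in `P` that are not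
nonnegative integer combinations of `P̃ ∩ ℤ^{N+1}`. -/
def boxP {N : ℕ} (P : Set (Pt N)) (d : ℕ) : Set (Pt N × ℝ) :=
  (⋃ v ∈ {v : Fin (d+1) → Pt N | EmptySimplexIn P d v}, boxSimplex v) \ genMonoid P

/-- Ehrhart counting function `|nP ∩ ℤ^N|`. -/
noncomputable def ehr {N : ℕ} (P : Set (Pt N)) (n : ℕ) : ℕ := (latPts (dil n P)).ncard

/-- The `δ`-vector of a `d`-dimensional polytope, via finite differences of the
Ehrhart counting function. -/
noncomputable def deltaVec {N : ℕ} (P : Set (Pt N)) (d i : ℕ) : ℤ :=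
  ∑ j ∈ Finset.range (i+1), (-1)^j * ((d+1).choose j) * (ehr P (i - j) : ℤ)

/-- The edge polytope `P_G` of a graph on `{1,…,d}`: the convex hull of the points
`eᵢ + e_j` over edges `{i,j}`. -/
def edgePolytope {d : ℕ} (G : SimpleGraph (Fin d)) : Set (Pt d) :=
  convexHull ℝ {x : Pt d | ∃ i j, G.Adj i j ∧
    x = fun k => (if k = i then (1:ℝ) else 0) + (if k = j then (1:ℝ) else 0)}

/-- A closed walk is an odd cycle. -/
def IsOddCycle {V : Type*} {G : SimpleGraph V} {u : V} (c : G.Walk u u) : Prop :=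
  c.IsCycle ∧ Odd c.length

/-- A cycle is minimal (chordless) if every edge of `G` between two of its vertices
is an edge of the cycle. -/
def Chordless {V : Type*} {G : SimpleGraph V} {u : V} (c : G.Walk u u) : Prop :=
  ∀ a b, a ∈ c.support → b ∈ c.support → G.Adj a b → s(a, b) ∈ c.edges

/-- Two cycles are vertex-disjoint. -/
def VertexDisjoint {V : Type*} {G : SimpleGraph V} {u v : V}
    (c : G.Walk u u) (c' : G.Walk v v) : Prop :=
  ∀ a, a ∈ c.support → a ∉ c'.support

/-- There is a bridge (an edge of `G`) between the two cycles. -/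
def HasBridge {V : Type*} {G : SimpleGraph V} {u v : V}
    (c : G.Walk u u) (c' : G.Walk v v) : Prop :=
  ∃ a b, a ∈ c.support ∧ b ∈ c'.support ∧ G.Adj a b

/-- An exceptional pair: vertex-disjoint odd cycles with no bridge between them. -/
def ExceptionalPair {V : Type*} {G : SimpleGraph V} {u v : V}
    (c : G.Walk u u) (c' : G.Walk v v) : Prop :=
  IsOddCycle c ∧ IsOddCycle c' ∧ VertexDisjoint c c' ∧ ¬ HasBridge c c'

/-- The odd cycle condition: any two vertex-disjoint odd cycles are joined by an edge. -/
def OddCycleCondition {V : Type*} (G : SimpleGraph V) : Prop :=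
  ∀ (u v : V) (c : G.Walk u u) (c' : G.Walk v v),
    IsOddCycle c → IsOddCycle c' → VertexDisjoint c c' → HasBridge c c'

/-!
Write `ρ(ab) = (e_a + e_b, 1)` for an edge `ab` and `e(C, C')` for the vector of an exceptional
pair of minimal odd cycles.

A lattice point of the cone over `P_G` is the vector of vertex weights of a nonnegative edge
weighting. By Hall's theorem, applied to as many copies of each vertex as its weight, it is then a
sum of vectors of closed walks. Closed walks split into edges and minimal odd cycles, and two
minimal odd cycles split into edges unless they form an exceptional pair. Since the degree is
integral, no odd cycle is left over, so the vectors `ρ(ab)` and `e(C, C')` generate the lattice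
points of the cone.

Upper bound: `2 e(C, C')` is a sum of edges, so every lattice point is a sum of edges and of
distinct vectors `e(C, C')`. If its degree is `n M` with `n` at least the number of vectors
`e(C, C')`, each of them can be filled up with edges to degree `M`.

Lower bound: let `x` be a lattice point that is supported on an exceptional pair and has an odd
sum over `C`. One summand of any decomposition of `x` is again of this kind. Such a point cannot
vanish at any vertex of `C`, because its weighting would then live on the path left by removing
that vertex, where the weight is balanced between the two colour classes; likewise for `C'`. Hence
its degree is at least that of `e(C, C')`.
-/

namespace EdgePolytope

open SimpleGraph AddSubmonoid
open scoped NNReal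

section WalkSums

variable {V A : Type*} [AddCommMonoid A] {G : SimpleGraph V} {f : V → A}

/-- The sum of `f` over the vertices of a walk without its first vertex, so that a closed walk
counts its base point once. -/
def walkSum (f : V → A) {u v : V} (w : G.Walk u v) : A := (w.support.tail.map f).sum

/-- The vectors `f a + f b` of the edges `ab` of `G`; for the vertex vectors of `ℝ^d × ℝ` these
are the degree-one lattice points `ρ(e)` generating the cone over the edge polytope. -/
def edgeSums (G : SimpleGraph V) (f : V → A) : Set A := {p | ∃ a b, G.Adj a b ∧ p = f a + f b}

/-- The vectors of the minimal odd cycles of `G`. -/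
def oddCycleSums (G : SimpleGraph V) (f : V → A) : Set A :=
  {p | ∃ (u : V) (c : G.Walk u u), IsOddCycle c ∧ Chordless c ∧ p = walkSum f c}

/-- The vectors `e(C, C')` of the exceptional pairs of minimal odd cycles of `G`. -/
def exceptionalSums (G : SimpleGraph V) (f : V → A) : Set A :=
  {p | ∃ (u v : V) (c : G.Walk u u) (c' : G.Walk v v),
    ExceptionalPair c c' ∧ Chordless c ∧ Chordless c' ∧ p = walkSum f c + walkSum f c'}

lemma edge_mem_closure {a b : V} (h : G.Adj a b) : f a + f b ∈ closure (edgeSums G f) :=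
  subset_closure ⟨a, b, h, rfl⟩

@[simp]
lemma walkSum_nil {u : V} : walkSum f (Walk.nil : G.Walk u u) = 0 := by simp [walkSum]

@[simp]
lemma walkSum_cons {u v w : V} (h : G.Adj u v) (p : G.Walk v w) :
    walkSum f (Walk.cons h p) = f v + walkSum f p := by
  rw [walkSum, Walk.support_cons, List.tail_cons, ← p.cons_tail_support, List.map_cons,
    List.sum_cons, walkSum]

@[simp]
lemma walkSum_append {u v w : V} (p : G.Walk u v) (q : G.Walk v w) :
    walkSum f (p.append q) = walkSum f p + walkSum f q := by
  simp [walkSum, Walk.tail_support_append]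

@[simp]
lemma walkSum_concat {u v w : V} (p : G.Walk u v) (h : G.Adj v w) :
    walkSum f (p.concat h) = walkSum f p + f w := by
  simp [Walk.concat_eq_append]

lemma walkSum_rotate [DecidableEq V] {u a : V} (p : G.Walk u u) (h : a ∈ p.support) :
    walkSum f (p.rotate a h) = walkSum f p := by
  conv_rhs => rw [← Walk.take_spec p h]
  rw [Walk.rotate, walkSum_append, walkSum_append, add_comm]

lemma walkSum_eq_sum_of_isCycle [DecidableEq V] {u : V} {c : G.Walk u u} (hc : c.IsCycle) :
    walkSum f c = ∑ v ∈ c.support.toFinset, f v := by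
  have htail : c.support.toFinset = c.support.tail.toFinset := by
    conv_lhs => rw [← c.cons_tail_support]
    rw [List.toFinset_cons,
      Finset.insert_eq_of_mem (List.mem_toFinset.2 (Walk.end_mem_tail_support hc.not_nil))]
  rw [htail, List.sum_toFinset _ hc.support_nodup, walkSum]

lemma card_support_toFinset [DecidableEq V] {u : V} {c : G.Walk u u} (hc : c.IsCycle) :
    c.support.toFinset.card = c.length := by
  rw [Finset.card_eq_sum_ones, ← walkSum_eq_sum_of_isCycle hc]
  simp [walkSum]

theorem walkSum_mem_closure_of_even : ∀ {u v : V} (p : G.Walk u v), Even p.length →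
    walkSum f p ∈ closure (edgeSums G f)
  | _, _, .nil, _ => by simp
  | _, _, .cons _ .nil, hp => by simp at hp
  | _, _, .cons _ (.cons h p), hp => by
    have hp' : Even p.length := by simpa [Nat.even_add_one] using hp
    rw [walkSum_cons, walkSum_cons, ← add_assoc]
    exact add_mem (edge_mem_closure h) (walkSum_mem_closure_of_even p hp')

lemma exists_walkSum_eq_add_of_odd {u v : V} (p : G.Walk u v) (hp : Odd p.length) :
    ∃ e ∈ closure (edgeSums G f), walkSum f p = e + f v := by
  cases p with
  | nil => simp at hp
  | cons h p =>
    obtain ⟨x, q, h', hq⟩ := Walk.exists_cons_eq_concat h p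
    rw [hq, Walk.length_concat, Nat.odd_add_one, Nat.not_odd_iff_even] at hp
    exact ⟨walkSum f q, walkSum_mem_closure_of_even q hp, by rw [hq, walkSum_concat]⟩

lemma walkSum_add_self_mem_closure {u : V} (p : G.Walk u u) :
    walkSum f p + walkSum f p ∈ closure (edgeSums G f) := by
  rw [← walkSum_append]
  exact walkSum_mem_closure_of_even _ (by simp)

lemma exists_closed_subwalk_of_not_isPath {u v : V} (p : G.Walk u v) (hp : ¬ p.IsPath) :
    ∃ (x : V) (p₁ : G.Walk u x) (q : G.Walk x x) (p₂ : G.Walk x v),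
      p = p₁.append (q.append p₂) ∧ 0 < q.length := by
  classical
  induction p with
  | nil => simp at hp
  | @cons a b c h p ih =>
    by_cases hpath : p.IsPath
    · have ha : a ∈ p.support := by
        by_contra ha
        exact hp ((Walk.cons_isPath_iff h p).2 ⟨hpath, ha⟩)
      exact ⟨a, Walk.nil, Walk.cons h (p.takeUntil a ha), p.dropUntil a ha,
        by simp [Walk.take_spec], by simp⟩
    · obtain ⟨x, p₁, q, p₂, rfl, hq⟩ := ih hpath
      exact ⟨x, Walk.cons h p₁, q, p₂, rfl, hq⟩

lemma exists_closed_subwalk_of_not_isCycle {u : V} (w : G.Walk u u) (hw : Odd w.length)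
    (hc : ¬ w.IsCycle) :
    ∃ (x : V) (p₁ : G.Walk u x) (q : G.Walk x x) (p₂ : G.Walk x u),
      w = p₁.append (q.append p₂) ∧ 0 < q.length ∧ 0 < p₁.length := by
  cases w with
  | nil => simp at hw
  | @cons _ b _ h p =>
    have hp : ¬ p.IsPath := by
      intro hp
      refine hc (Walk.isCycle_iff_isPath_tail_and_le_length.2 ⟨by simpa using hp, ?_⟩)
      have hpos : p.length ≠ 0 := fun h0 => h.ne (Walk.eq_of_length_eq_zero h0).symm
      rw [Walk.length_cons] at hw ⊢
      grind
    obtain ⟨x, p₁, q, p₂, rfl, hq⟩ := exists_closed_subwalk_of_not_isPath p hp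
    exact ⟨x, Walk.cons h p₁, q, p₂, rfl, hq, by simp⟩

/-- `w'` is a shorter odd closed walk obtained from `w` by splitting off edge vectors. -/
def IsReduction (f : V → A) {u x : V} (w : G.Walk u u) (w' : G.Walk x x) : Prop :=
  Odd w'.length ∧ w'.length < w.length ∧
    ∃ e ∈ closure (edgeSums G f), walkSum f w = e + walkSum f w'

lemma exists_isReduction_of_not_isCycle {u : V} (w : G.Walk u u) (hw : Odd w.length)
    (hc : ¬ w.IsCycle) : ∃ (x : V) (w' : G.Walk x x), IsReduction f w w' := by
  obtain ⟨x, p₁, q, p₂, rfl, hq, hp₁⟩ := exists_closed_subwalk_of_not_isCycle w hw hc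
  have hsum : walkSum f (p₁.append (q.append p₂)) = walkSum f q + walkSum f (p₁.append p₂) := by
    simp only [walkSum_append]; abel
  simp only [Walk.length_append] at hw
  rcases Nat.even_or_odd q.length with hq_even | hq_odd
  · exact ⟨u, p₁.append p₂, by rw [Walk.length_append]; grind,
      by simp only [Walk.length_append]; lia, walkSum f q, walkSum_mem_closure_of_even q hq_even,
      hsum⟩
  · refine ⟨x, q, hq_odd, by simp only [Walk.length_append]; lia, walkSum f (p₁.append p₂), ?_,
      by rw [hsum, add_comm]⟩
    exact walkSum_mem_closure_of_even _ (by rw [Walk.length_append]; grind)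

lemma isReduction_append_concat {a b : V} (p : G.Walk a b) (q : G.Walk b a) (hab : G.Adj a b)
    (hp : Even p.length) (hq : Odd q.length) (hne : s(a, b) ∉ q.edges) :
    IsReduction f (p.append q) (p.concat hab.symm) := by
  have hq_len : q.length ≠ 1 := by
    intro h
    cases q with
    | nil => simp at h
    | cons h' q =>
      cases q with
      | nil => simp [Sym2.eq_swap] at hne
      | cons => simp at h
  obtain ⟨e, he, hsum⟩ := exists_walkSum_eq_add_of_odd (f := f) q hq
  refine ⟨by rw [Walk.length_concat]; exact hp.add_one, ?_, e, he, ?_⟩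
  · rw [Walk.length_concat, Walk.length_append]
    grind
  · rw [walkSum_append, walkSum_concat, hsum]; abel

lemma exists_isReduction_of_not_chordless {u : V} (w : G.Walk u u) (hw : Odd w.length)
    (hc : ¬ Chordless w) : ∃ (x : V) (w' : G.Walk x x), IsReduction f w w' := by
  classical
  unfold Chordless at hc
  push Not at hc
  obtain ⟨a, b, ha, hb, hab, hne⟩ := hc
  have hb' : b ∈ (w.rotate a ha).support := (w.mem_support_rotate_iff a ha).2 hb
  obtain ⟨p, q, hpq⟩ := Walk.mem_support_iff_exists_append.1 hb'
  have hsum : walkSum f w = walkSum f p + walkSum f q := by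
    rw [← walkSum_rotate w ha, hpq, walkSum_append]
  have hlen : w.length = p.length + q.length := by
    rw [← w.length_rotate a ha, hpq, Walk.length_append]
  have hedge : s(a, b) ∉ p.edges ∧ s(a, b) ∉ q.edges := by
    rwa [← (w.rotate_edges a ha).mem_iff, hpq, Walk.edges_append, List.mem_append, not_or] at hne
  rcases Nat.even_or_odd p.length with hp | hp
  · have hq : Odd q.length := by grind
    refine ⟨a, p.concat hab.symm, ?_⟩
    simpa only [IsReduction, hlen, hsum, Walk.length_append, walkSum_append] using
      isReduction_append_concat (f := f) p q hab hp hq hedge.2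
  · have hq : Even q.length := by grind
    refine ⟨b, q.concat hab, ?_⟩
    simpa only [IsReduction, hlen, hsum, Walk.length_append, walkSum_append,
      add_comm p.length, add_comm (walkSum f p)] using
      isReduction_append_concat (f := f) q p hab.symm hq hp (by rw [Sym2.eq_swap]; exact hedge.1)

theorem exists_oddCycleSum_of_odd_closed {u : V} (w : G.Walk u u) (hw : Odd w.length) :
    ∃ e ∈ closure (edgeSums G f), ∃ c ∈ oddCycleSums G f, walkSum f w = e + c := by
  induction hn : w.length using Nat.strong_induction_on generalizing u w with
  | _ n ih =>
    by_cases hmin : w.IsCycle ∧ Chordless w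
    · exact ⟨0, zero_mem _, walkSum f w, ⟨u, w, ⟨hmin.1, hw⟩, hmin.2, rfl⟩, (zero_add _).symm⟩
    · obtain ⟨x, w', hw', hlt, e, he, hsum⟩ : ∃ (x : V) (w' : G.Walk x x), IsReduction f w w' := by
        rcases not_and_or.1 hmin with h | h
        · exact exists_isReduction_of_not_isCycle w hw h
        · exact exists_isReduction_of_not_chordless w hw h
      obtain ⟨e', he', c, hc, hsum'⟩ := ih w'.length (hn ▸ hlt) w' hw' rfl
      exact ⟨e + e', add_mem he he', c, hc, by rw [hsum, hsum', add_assoc]⟩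

lemma walkSum_mem_closure_edgeSums_union_oddCycleSums {u : V} (w : G.Walk u u) :
    walkSum f w ∈ closure (edgeSums G f ∪ oddCycleSums G f) := by
  rw [AddSubmonoid.closure_union]
  rcases Nat.even_or_odd w.length with hw | hw
  · exact mem_sup_left (walkSum_mem_closure_of_even w hw)
  · obtain ⟨e, he, c, hc, hsum⟩ := exists_oddCycleSum_of_odd_closed (f := f) w hw
    exact hsum ▸ add_mem_sup he (subset_closure hc)

lemma walkSum_add_mem_closure_of_hasBridge {u v : V} {c : G.Walk u u} {c' : G.Walk v v}
    (hc : Odd c.length) (hc' : Odd c'.length) (h : HasBridge c c') :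
    walkSum f c + walkSum f c' ∈ closure (edgeSums G f) := by
  classical
  obtain ⟨a, b, ha, hb, hab⟩ := h
  obtain ⟨e, he, hsum⟩ := exists_walkSum_eq_add_of_odd (f := f) (c.rotate a ha) (by simpa using hc)
  obtain ⟨e', he', hsum'⟩ :=
    exists_walkSum_eq_add_of_odd (f := f) (c'.rotate b hb) (by simpa using hc')
  rw [walkSum_rotate] at hsum hsum'
  rw [hsum, hsum', add_add_add_comm]
  exact add_mem (add_mem he he') (edge_mem_closure hab)

lemma walkSum_add_mem_closure_of_not_vertexDisjoint {u v : V} {c : G.Walk u u} {c' : G.Walk v v}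
    (hc : Odd c.length) (hc' : Odd c'.length) (h : ¬ VertexDisjoint c c') :
    walkSum f c + walkSum f c' ∈ closure (edgeSums G f) := by
  classical
  unfold VertexDisjoint at h
  push Not at h
  obtain ⟨a, ha, ha'⟩ := h
  rw [← walkSum_rotate c ha, ← walkSum_rotate c' ha', ← walkSum_append]
  exact walkSum_mem_closure_of_even _ (by simpa using hc.add_odd hc')

lemma add_mem_closure_of_mem_oddCycleSums {p q : A} (hp : p ∈ oddCycleSums G f)
    (hq : q ∈ oddCycleSums G f) : p + q ∈ closure (edgeSums G f ∪ exceptionalSums G f) := by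
  obtain ⟨u, c, hc, hcc, rfl⟩ := hp
  obtain ⟨v, c', hc', hcc', rfl⟩ := hq
  rw [AddSubmonoid.closure_union]
  by_cases hdisj : VertexDisjoint c c'
  · by_cases hbridge : HasBridge c c'
    · exact mem_sup_left (walkSum_add_mem_closure_of_hasBridge hc.2 hc'.2 hbridge)
    · exact mem_sup_right
        (subset_closure ⟨u, v, c, c', ⟨hc, hc', hdisj, hbridge⟩, hcc, hcc', rfl⟩)
  · exact mem_sup_left (walkSum_add_mem_closure_of_not_vertexDisjoint hc.2 hc'.2 hdisj)

theorem mem_closure_or_exists_oddCycleSum_add {p : A}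
    (hp : p ∈ closure (edgeSums G f ∪ oddCycleSums G f)) :
    p ∈ closure (edgeSums G f ∪ exceptionalSums G f) ∨
      ∃ c ∈ oddCycleSums G f, ∃ q ∈ closure (edgeSums G f ∪ exceptionalSums G f), p = c + q := by
  induction hp using closure_induction_left with
  | zero => exact Or.inl (zero_mem _)
  | add_left x hx y _ ih =>
    rcases hx, ih with ⟨hx | hx, ih | ⟨c, hc, q, hq, rfl⟩⟩
    · exact Or.inl (add_mem (subset_closure (Or.inl hx)) ih)
    · exact Or.inr ⟨c, hc, x + q, add_mem (subset_closure (Or.inl hx)) hq, add_left_comm _ _ _⟩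
    · exact Or.inr ⟨x, hx, y, ih, rfl⟩
    · exact Or.inl (add_assoc x c q ▸ add_mem (add_mem_closure_of_mem_oddCycleSums hx hc) hq)

lemma edgeSums_finite [Finite V] : (edgeSums G f).Finite :=
  (Set.finite_range fun q : V × V => f q.1 + f q.2).subset fun _ ⟨a, b, _, hp⟩ => ⟨(a, b), hp.symm⟩

lemma exceptionalSums_finite [Finite V] : (exceptionalSums G f).Finite := by
  classical
  refine (Set.finite_range fun S : Finset V × Finset V =>
    ∑ v ∈ S.1, f v + ∑ v ∈ S.2, f v).subset ?_
  rintro _ ⟨u, v, c, c', hpair, -, -, rfl⟩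
  exact ⟨(c.support.toFinset, c'.support.toFinset), by
    rw [walkSum_eq_sum_of_isCycle hpair.1.1, walkSum_eq_sum_of_isCycle hpair.2.1.1]⟩

lemma exists_walk_of_iterate {X : Type*} (l : X → V) (σ : Equiv.Perm X)
    (hσ : ∀ x, σ x ≠ x → G.Adj (l x) (l (σ x))) (n : ℕ) {x y : X} (hx : σ x ≠ x)
    (hxy : (σ ^ n) x = y) :
    ∃ w : G.Walk (l x) (l y), walkSum f w = ((List.iterate σ (σ x) n).map (f ∘ l)).sum := by
  induction n generalizing x with
  | zero =>
    obtain rfl : x = y := hxy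
    exact ⟨Walk.nil, by simp⟩
  | succ n ih =>
    obtain ⟨w, hw⟩ := ih (x := σ x) (by simpa using hx) (by rw [← hxy, pow_succ]; rfl)
    exact ⟨Walk.cons (hσ x hx) w, by simp [hw]⟩

lemma exists_closed_walk_of_isCycle {X : Type*} [Fintype X] [DecidableEq X] (l : X → V)
    {σ : Equiv.Perm X} (hc : σ.IsCycle) (hσ : ∀ x, σ x ≠ x → G.Adj (l x) (l (σ x))) :
    ∃ (u : V) (w : G.Walk u u), walkSum f w = ∑ x ∈ σ.support, f (l x) := by
  obtain ⟨x, hx, -⟩ := id hc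
  have hσx : σ (σ x) ≠ σ x := by simpa using hx
  have hperiod : (σ ^ σ.support.card) x = x := by
    rw [← hc.orderOf, pow_orderOf_eq_one, Equiv.Perm.one_apply]
  obtain ⟨w, hw⟩ := exists_walk_of_iterate (f := f) l σ hσ σ.support.card hx hperiod
  have horbit : List.iterate σ (σ x) σ.support.card = σ.toList (σ x) := by
    rw [Equiv.Perm.toList, hc.cycleOf_eq hσx]
  have hsupport : (σ.toList (σ x)).toFinset = σ.support := by
    ext y
    rw [List.mem_toFinset, Equiv.Perm.mem_toList_iff, Equiv.Perm.mem_support,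
      Equiv.Perm.mem_support, and_iff_left hσx]
    exact ⟨fun h hy => hσx (h.apply_eq_self_iff.2 hy), hc.sameCycle hσx⟩
  refine ⟨l x, w, ?_⟩
  rw [hw, horbit, ← hsupport, List.sum_toFinset _ (σ.nodup_toList (σ x))]
  rfl

theorem sum_support_mem_closure {X : Type*} [Fintype X] [DecidableEq X] (l : X → V)
    (σ : Equiv.Perm X) (hσ : ∀ x, σ x ≠ x → G.Adj (l x) (l (σ x))) :
    ∑ x ∈ σ.support, f (l x) ∈ closure (edgeSums G f ∪ oddCycleSums G f) := by
  induction σ using Equiv.Perm.cycle_induction_on with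
  | base_one => simp
  | base_cycles σ hc =>
    obtain ⟨u, w, hw⟩ := exists_closed_walk_of_isCycle (f := f) l hc hσ
    exact hw ▸ walkSum_mem_closure_edgeSums_union_oddCycleSums w
  | induction_disjoint σ τ hd _ ihσ ihτ =>
    rw [hd.support_mul, Finset.sum_union (Equiv.Perm.disjoint_iff_disjoint_support.1 hd)]
    refine add_mem (ihσ fun x hx => ?_) (ihτ fun x hx => ?_)
    · have hτ : τ x = x := (hd x).resolve_left hx
      have hστ : (σ * τ) x = σ x := by rw [Equiv.Perm.mul_apply, hτ]
      exact hστ ▸ hσ x (hστ ▸ hx)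
    · have hσx : σ x = x := (hd x).resolve_right hx
      have hστ : (σ * τ) x = τ x := by rw [hd.commute.eq, Equiv.Perm.mul_apply, hσx]
      exact hστ ▸ hσ x (hστ ▸ hx)

end WalkSums

section Alternating

variable {V : Type*} {G : SimpleGraph V}

lemma exists_alternating_of_isPath {u v : V} {p : G.Walk u v}
    (hp : p.IsPath) : ∃ A : Set V, ∀ a b, s(a, b) ∈ p.edges → (a ∈ A ↔ b ∉ A) := by
  induction p with
  | nil => exact ⟨∅, by simp⟩
  | @cons u v w h p ih =>
    rw [Walk.cons_isPath_iff] at hp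
    obtain ⟨A, hA⟩ := ih hp.1
    refine ⟨{a | (a ≠ u ∧ a ∈ A) ∨ (a = u ∧ v ∉ A)}, fun a b hab => ?_⟩
    rw [Walk.edges_cons, List.mem_cons, Sym2.eq_iff] at hab
    have hne := h.ne
    rcases hab with (⟨rfl, rfl⟩ | ⟨rfl, rfl⟩) | hab
    · simp [hne.symm]
    · simp [hne.symm]
    · have ha : a ≠ u := fun h => hp.2 (h ▸ p.fst_mem_support_of_mem_edges hab)
      have hb : b ≠ u := fun h => hp.2 (h ▸ p.snd_mem_support_of_mem_edges hab)
      simpa [ha, hb] using hA a b hab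

lemma exists_alternating_of_isCycle {u v : V} {c : G.Walk u u} (hc : c.IsCycle)
    (hv : v ∈ c.support) :
    ∃ A : Set V, ∀ a b, a ≠ v → b ≠ v → s(a, b) ∈ c.edges → (a ∈ A ↔ b ∉ A) := by
  classical
  obtain ⟨A, hA⟩ := exists_alternating_of_isPath (hc.rotate hv).isPath_tail
  refine ⟨A, fun a b ha hb hab => hA a b ?_⟩
  have hab' : s(a, b) ∈ (c.rotate v hv).edges := (c.rotate_edges v hv).mem_iff.2 hab
  rw [← Walk.cons_tail_eq _ (hc.rotate hv).not_nil, Walk.edges_cons, List.mem_cons,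
    Sym2.eq_iff] at hab'
  grind

end Alternating

section FractionalMatching

variable {V : Type*} [Fintype V] {G : SimpleGraph V} {x y : V → ℝ} {m n : V → V → ℝ}

/-- `m` is a nonnegative weight on the edges of `G`, recorded as a symmetric function on pairs of
vertices, whose total weight at each vertex `v` is `x v`. The points `x` that have such a weight
form the cone over the edge polytope of `G`. -/
structure IsFractionalMatching (G : SimpleGraph V) (x : V → ℝ) (m : V → V → ℝ) : Prop where
  nonneg : ∀ a b, 0 ≤ m a b
  symm : ∀ a b, m a b = m b a
  adj : ∀ {a b}, m a b ≠ 0 → G.Adj a b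
  sum_eq : ∀ v, ∑ b, m v b = x v

namespace IsFractionalMatching

lemma zero : IsFractionalMatching G 0 0 where
  nonneg _ _ := le_rfl
  symm _ _ := rfl
  adj h := absurd rfl h
  sum_eq _ := by simp

lemma add (hm : IsFractionalMatching G x m) (hn : IsFractionalMatching G y n) :
    IsFractionalMatching G (x + y) (m + n) where
  nonneg a b := add_nonneg (hm.nonneg a b) (hn.nonneg a b)
  symm a b := congrArg₂ (· + ·) (hm.symm a b) (hn.symm a b)
  adj {a b} h := by
    by_contra hab
    exact h (by simp [not_imp_comm.1 hm.adj hab, not_imp_comm.1 hn.adj hab])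
  sum_eq v := by simp [Finset.sum_add_distrib, hm.sum_eq, hn.sum_eq]

lemma smul (hm : IsFractionalMatching G x m) {r : ℝ} (hr : 0 ≤ r) :
    IsFractionalMatching G (r • x) (r • m) where
  nonneg a b := mul_nonneg hr (hm.nonneg a b)
  symm a b := congrArg (r * ·) (hm.symm a b)
  adj h := hm.adj (right_ne_zero_of_mul h)
  sum_eq v := by simp [← Finset.mul_sum, hm.sum_eq]

lemma single [DecidableEq V] {a b : V} (hab : G.Adj a b) :
    IsFractionalMatching G (Pi.single a 1 + Pi.single b 1)
      (Pi.single a (Pi.single b 1) + Pi.single b (Pi.single a 1)) where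
  nonneg i j := by
    have hnn : ∀ k l : V, 0 ≤ (Pi.single k (Pi.single l 1) : V → V → ℝ) := fun k l => by
      simp [Pi.single_nonneg]
    exact add_nonneg (hnn a b i j) (hnn b a i j)
  symm i j := by simp only [Pi.add_apply, Pi.single_apply, ite_apply, Pi.zero_apply]; grind
  adj {i j} h := by
    simp only [Pi.add_apply, Pi.single_apply, ite_apply, Pi.zero_apply] at h
    grind [G.adj_comm]
  sum_eq i := by simp [Pi.single_apply, ite_apply, Finset.sum_add_distrib]

lemma value_nonneg (hm : IsFractionalMatching G x m) (v : V) : 0 ≤ x v :=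
  hm.sum_eq v ▸ Finset.sum_nonneg fun b _ => hm.nonneg v b

lemma eq_zero_of_value_eq_zero (hm : IsFractionalMatching G x m) {v : V} (hv : x v = 0) (b : V) :
    m v b = 0 :=
  (Finset.sum_eq_zero_iff_of_nonneg fun b _ => hm.nonneg v b).1 (hm.sum_eq v ▸ hv) b
    (Finset.mem_univ b)

lemma sum_eq_of_subset (hm : IsFractionalMatching G x m) {v : V} {T : Finset V}
    (hT : ∀ b, m v b ≠ 0 → b ∈ T) : ∑ b ∈ T, m v b = x v := by
  rw [← hm.sum_eq v]
  exact Finset.sum_subset (Finset.subset_univ T) fun b _ hb => not_imp_comm.1 (hT b) hb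

lemma sum_le_sum_neighbors (hm : IsFractionalMatching G x m) {S T : Finset V}
    (hT : ∀ a ∈ S, ∀ b, G.Adj a b → b ∈ T) : ∑ a ∈ S, x a ≤ ∑ b ∈ T, x b :=
  calc ∑ a ∈ S, x a = ∑ a ∈ S, ∑ b ∈ T, m a b :=
        Finset.sum_congr rfl fun a ha =>
          (hm.sum_eq_of_subset fun b hb => hT a ha b (hm.adj hb)).symm
    _ = ∑ b ∈ T, ∑ a ∈ S, m b a := by simp_rw [Finset.sum_comm (s := S), hm.symm]
    _ ≤ ∑ b ∈ T, ∑ a, m b a := Finset.sum_le_sum fun b _ =>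
        Finset.sum_le_sum_of_subset_of_nonneg (Finset.subset_univ S) fun a _ _ => hm.nonneg b a
    _ = ∑ b ∈ T, x b := Finset.sum_congr rfl fun b _ => hm.sum_eq b

-- Hall's theorem, applied to `α v` copies of each vertex `v`.
lemma exists_perm_adj {α : V → ℕ} (hm : IsFractionalMatching G (fun v => α v) m) :
    ∃ σ : Equiv.Perm (Σ v, Fin (α v)), ∀ i, G.Adj i.1 (σ i).1 := by
  classical
  let N : (Σ v, Fin (α v)) → Finset (Σ v, Fin (α v)) := fun i => {j | G.Adj i.1 j.1}
  have hall : ∀ T : Finset (Σ v, Fin (α v)), T.card ≤ (T.biUnion N).card := by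
    intro T
    let S : Finset V := T.image Sigma.fst
    let S' : Finset V := {b | ∃ a ∈ S, G.Adj a b}
    have hcard : ∀ R : Finset V, (R.sigma fun v => (Finset.univ : Finset (Fin (α v)))).card
        = ∑ v ∈ R, α v := fun R => by simp
    have hSS' : ∑ a ∈ S, α a ≤ ∑ b ∈ S', α b := by
      have hreal := hm.sum_le_sum_neighbors (S := S) (T := S') fun a ha b hab =>
        Finset.mem_filter.2 ⟨Finset.mem_univ b, a, ha, hab⟩
      exact_mod_cast hreal
    calc T.card ≤ (S.sigma fun v => (Finset.univ : Finset (Fin (α v)))).card :=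
          Finset.card_le_card fun i hi => Finset.mem_sigma.2
            ⟨Finset.mem_image_of_mem Sigma.fst hi, Finset.mem_univ _⟩
      _ ≤ (S'.sigma fun v => (Finset.univ : Finset (Fin (α v)))).card := by
          rw [hcard, hcard]; exact hSS'
      _ ≤ (T.biUnion N).card := Finset.card_le_card fun j hj => by
          simpa [S, S', N] using hj
  obtain ⟨σ, hinj, hσ⟩ := (Finset.all_card_le_biUnion_card_iff_exists_injective N).1 hall
  exact ⟨Equiv.ofBijective σ (Finite.injective_iff_bijective.1 hinj),
    fun i => (Finset.mem_filter.1 (hσ i)).2⟩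

theorem sum_nsmul_mem_closure {A : Type*} [AddCommMonoid A] {α : V → ℕ}
    (hm : IsFractionalMatching G (fun v => α v) m) (f : V → A) :
    ∑ v, α v • f v ∈ closure (edgeSums G f ∪ oddCycleSums G f) := by
  classical
  obtain ⟨σ, hσ⟩ := hm.exists_perm_adj
  have hsupport : σ.support = Finset.univ := Finset.eq_univ_iff_forall.2 fun i =>
    Equiv.Perm.mem_support.2 fun hi => (hσ i).ne (congrArg Sigma.fst hi).symm
  have hsum : ∑ v, α v • f v = ∑ i ∈ σ.support, f i.1 := by
    simp [hsupport, Fintype.sum_sigma]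
  exact hsum ▸ sum_support_mem_closure Sigma.fst σ fun i _ => hσ i

open scoped Classical in
lemma sum_eq_two_mul_sum_filter (hm : IsFractionalMatching G x m) {S : Finset V} {A : Set V}
    (hA : ∀ a ∈ S, ∀ b, m a b ≠ 0 → b ∈ S ∧ (a ∈ A ↔ b ∉ A)) :
    ∑ a ∈ S, x a = 2 * ∑ a ∈ S with a ∈ A, x a := by
  have hin : ∑ a ∈ S with a ∈ A, x a = ∑ a ∈ S with a ∈ A, ∑ b ∈ S with b ∉ A, m a b :=
    Finset.sum_congr rfl fun a ha => (hm.sum_eq_of_subset fun b hb => by grind).symm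
  have hout : ∑ b ∈ S with b ∉ A, x b = ∑ b ∈ S with b ∉ A, ∑ a ∈ S with a ∈ A, m b a :=
    Finset.sum_congr rfl fun a ha => (hm.sum_eq_of_subset fun b hb => by grind).symm
  have hcross : ∑ a ∈ S with a ∈ A, x a = ∑ b ∈ S with b ∉ A, x b := by
    rw [hin, hout, Finset.sum_comm]
    simp_rw [hm.symm]
  rw [← Finset.sum_filter_add_sum_filter_not S (· ∈ A), ← hcross, two_mul]

-- If `x` vanished at a vertex of the cycle, the rest of the cycle would be a path, on which the
-- weight of `m` is balanced between the two colour classes, so the sum would be even.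
lemma value_ne_zero_of_odd [DecidableEq V] (hm : IsFractionalMatching G x m) {u : V}
    {c : G.Walk u u} (hc : c.IsCycle) (hchord : Chordless c)
    (hstay : ∀ a ∈ c.support, ∀ b, m a b ≠ 0 → b ∈ c.support) {z : V → ℤ} (hz : ∀ v, x v = z v)
    (hodd : Odd (∑ v ∈ c.support.toFinset, z v)) {v : V} (hv : v ∈ c.support) : x v ≠ 0 := by
  classical
  intro hxv
  obtain ⟨A, hA⟩ := exists_alternating_of_isCycle hc hv
  have hcross : ∀ a ∈ c.support.toFinset, ∀ b, m a b ≠ 0 →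
      b ∈ c.support.toFinset ∧ (a ∈ A ↔ b ∉ A) := by
    intro a ha b hab
    rw [List.mem_toFinset] at ha ⊢
    have hb := hstay a ha b hab
    have hav : a ≠ v := fun h => hab (h ▸ hm.eq_zero_of_value_eq_zero hxv b)
    have hbv : b ≠ v := fun h => hab (hm.symm a b ▸ h ▸ hm.eq_zero_of_value_eq_zero hxv a)
    exact ⟨hb, hA a b hav hbv (hchord a b ha hb (hm.adj hab))⟩
  have hbalance := hm.sum_eq_two_mul_sum_filter hcross
  simp only [hz] at hbalance
  norm_cast at hbalance
  exact Int.not_even_iff_odd.2 hodd (hbalance ▸ even_two_mul _)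

theorem length_le_sum_of_odd [DecidableEq V] (hm : IsFractionalMatching G x m) {u : V}
    {c : G.Walk u u} (hc : c.IsCycle) (hchord : Chordless c)
    (hstay : ∀ a ∈ c.support, ∀ b, m a b ≠ 0 → b ∈ c.support) {z : V → ℤ} (hz : ∀ v, x v = z v)
    (hodd : Odd (∑ v ∈ c.support.toFinset, z v)) :
    (c.length : ℤ) ≤ ∑ v ∈ c.support.toFinset, z v := by
  have hone : ∀ v ∈ c.support.toFinset, 1 ≤ z v := by
    intro v hv
    have hnonneg := hm.value_nonneg v
    have hne := hm.value_ne_zero_of_odd hc hchord hstay hz hodd (List.mem_toFinset.1 hv)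
    rw [hz] at hnonneg hne
    norm_cast at hnonneg hne
    lia
  simpa [card_support_toFinset hc] using Finset.card_nsmul_le_sum _ _ 1 hone

end IsFractionalMatching

/-- `x` vanishes off the two cycles and has an odd integral sum on the first one. This is the
property of the vector of an exceptional pair that every decomposition into lattice points of the
cone hands down to one of its summands. -/
def IsOddOnPair [DecidableEq V] {u v : V} (c : G.Walk u u) (c' : G.Walk v v) (x : V → ℝ) : Prop :=
  (∀ i, i ∉ c.support → i ∉ c'.support → x i = 0) ∧
    ∃ t : ℤ, Odd t ∧ ∑ i ∈ c.support.toFinset, x i = t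

lemma sum_eq_sum_support_add_sum_support [DecidableEq V] {u v : V} {c : G.Walk u u}
    {c' : G.Walk v v} (hdisj : VertexDisjoint c c')
    (hx : ∀ i, i ∉ c.support → i ∉ c'.support → x i = 0) :
    ∑ i, x i = ∑ i ∈ c.support.toFinset, x i + ∑ i ∈ c'.support.toFinset, x i := by
  have hdisj' : Disjoint c.support.toFinset c'.support.toFinset :=
    Finset.disjoint_left.2 fun i hi => by simpa using hdisj i (List.mem_toFinset.1 hi)
  rw [← Finset.sum_union hdisj']
  refine (Finset.sum_subset (Finset.subset_univ _) fun i _ hi => ?_).symm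
  rw [Finset.mem_union, List.mem_toFinset, List.mem_toFinset, not_or] at hi
  exact hx i hi.1 hi.2

lemma IsFractionalMatching.mem_support_of_ne_zero (hm : IsFractionalMatching G x m) {u v : V}
    {c : G.Walk u u} {c' : G.Walk v v} (hx : ∀ i, i ∉ c.support → i ∉ c'.support → x i = 0)
    (hbridge : ¬ HasBridge c c') {a b : V} (ha : a ∈ c.support) (hab : m a b ≠ 0) :
    b ∈ c.support := by
  by_contra hb
  have hb' : b ∉ c'.support := fun hb' => hbridge ⟨a, b, ha, hb', hm.adj hab⟩
  exact hab (hm.symm a b ▸ hm.eq_zero_of_value_eq_zero (hx b hb hb') a)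

theorem IsFractionalMatching.length_add_length_le_sum [DecidableEq V]
    (hm : IsFractionalMatching G x m) {u v : V} {c : G.Walk u u} {c' : G.Walk v v}
    (hpair : ExceptionalPair c c') (hc : Chordless c) (hc' : Chordless c')
    (hodd : IsOddOnPair c c' x) (hlat : ∀ i, ∃ z : ℤ, x i = z)
    (heven : ∃ z : ℤ, ∑ i, x i = 2 * z) :
    (c.length + c'.length : ℝ) ≤ ∑ i, x i := by
  obtain ⟨hcyc, hcyc', hdisj, hbridge⟩ := hpair
  obtain ⟨hsupp, t, ht, hsum_c⟩ := hodd
  obtain ⟨e, he⟩ := heven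
  choose z hz using hlat
  have hstay' : ∀ a ∈ c'.support, ∀ b, m a b ≠ 0 → b ∈ c'.support := fun a ha b hab =>
    hm.mem_support_of_ne_zero (fun i h h' => hsupp i h' h)
      (fun ⟨a, b, ha, hb, hab⟩ => hbridge ⟨b, a, hb, ha, hab.symm⟩) ha hab
  have hsplit := sum_eq_sum_support_add_sum_support hdisj hsupp
  have hlat_c : ∑ i ∈ c.support.toFinset, z i = t := by
    simp only [hz] at hsum_c
    exact_mod_cast hsum_c
  have htotal : 2 * e = t + ∑ i ∈ c'.support.toFinset, z i := by
    rw [he, hsum_c] at hsplit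
    simp only [hz] at hsplit
    exact_mod_cast hsplit
  have hle := hm.length_le_sum_of_odd hcyc.1 hc
    (fun a ha b => hm.mem_support_of_ne_zero hsupp hbridge ha) hz (hlat_c ▸ ht)
  have hle' := hm.length_le_sum_of_odd hcyc'.1 hc' hstay' hz (by grind)
  rw [he]
  exact_mod_cast (by lia : (c.length + c'.length : ℤ) ≤ 2 * e)

end FractionalMatching

section Regrouping

variable {A : Type*} [AddCommMonoid A] {E F : Set A} {deg : A →+ ℝ} {M : ℕ}

lemma degree_list_sum_eq_length (hE : ∀ p ∈ E, deg p = 1) {l : List A} (hl : ∀ p ∈ l, p ∈ E) :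
    deg l.sum = l.length := by
  rw [map_list_sum, List.map_congr_left fun p hp => hE p (hl p hp)]
  simp

lemma eq_zero_of_degree_eq_zero (hE : ∀ p ∈ E, deg p = 1) {e : A} (he : e ∈ closure E)
    (hdeg : deg e = 0) : e = 0 := by
  obtain ⟨l, hl, rfl⟩ := exists_list_of_mem_closure he
  rw [degree_list_sum_eq_length hE hl, Nat.cast_eq_zero, List.length_eq_zero_iff] at hdeg
  rw [hdeg, List.sum_nil]

lemma exists_add_eq_of_le_degree (hE : ∀ p ∈ E, deg p = 1) {e : A} (he : e ∈ closure E) {k : ℕ}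
    (hk : (k : ℝ) ≤ deg e) : ∃ a ∈ closure E, ∃ b ∈ closure E, deg a = k ∧ a + b = e := by
  obtain ⟨l, hl, rfl⟩ := exists_list_of_mem_closure he
  have htake : ∀ p ∈ l.take k, p ∈ E := fun p hp => hl p (List.mem_of_mem_take hp)
  have hdrop : ∀ p ∈ l.drop k, p ∈ E := fun p hp => hl p (List.mem_of_mem_drop hp)
  rw [degree_list_sum_eq_length hE hl, Nat.cast_le] at hk
  exact ⟨(l.take k).sum, list_sum_mem fun p hp => subset_closure (htake p hp),
    (l.drop k).sum, list_sum_mem fun p hp => subset_closure (hdrop p hp),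
    by rw [degree_list_sum_eq_length hE htake, List.length_take_of_le hk],
    l.sum_take_add_sum_drop k⟩

lemma exists_list_degree_eq_of_add_list_sum (hE : ∀ p ∈ E, deg p = 1) {S : AddSubmonoid A}
    (hES : E ⊆ S) {T : List A} (hTS : ∀ t ∈ T, t ∈ S) (hTM : ∀ t ∈ T, ∃ k : ℕ, k ≤ M ∧ deg t = k)
    {e : A} (he : e ∈ closure E) (hdeg : deg (e + T.sum) = T.length * M) :
    ∃ L : List A, L.length = T.length ∧ (∀ q ∈ L, q ∈ S ∧ deg q = M) ∧ L.sum = e + T.sum := by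
  induction T generalizing e with
  | nil =>
    obtain rfl : e = 0 := eq_zero_of_degree_eq_zero hE he (by simpa using hdeg)
    exact ⟨[], by simp⟩
  | cons t T ih =>
    rw [List.forall_mem_cons] at hTS hTM
    obtain ⟨k, hkM, hk⟩ := hTM.1
    have hT_le : deg T.sum ≤ T.length * M := by
      rw [map_list_sum]
      simpa using List.sum_le_card_nsmul (T.map deg) (M : ℝ) (by
        rintro _ hr
        obtain ⟨s, hs, rfl⟩ := List.mem_map.1 hr
        obtain ⟨j, hjM, hj⟩ := hTM.2 s hs
        exact hj ▸ Nat.cast_le.2 hjM)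
    simp only [List.sum_cons, map_add, List.length_cons, Nat.cast_add, Nat.cast_one, hk] at hdeg
    obtain ⟨a, ha, b, hb, hdeg_a, rfl⟩ :=
      exists_add_eq_of_le_degree hE he (k := M - k) (by push_cast [hkM]; linarith)
    rw [Nat.cast_sub hkM] at hdeg_a
    rw [map_add, hdeg_a] at hdeg
    obtain ⟨L, hlen, hL, hsum⟩ := ih hTS.2 hTM.2 hb (by rw [map_add]; linarith)
    refine ⟨(a + t) :: L, by simp [hlen], List.forall_mem_cons.2 ⟨⟨?_, ?_⟩, hL⟩, ?_⟩
    · exact add_mem (closure_le.2 hES ha) hTS.1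
    · rw [map_add, hdeg_a, hk, sub_add_cancel]
    · rw [List.sum_cons, List.sum_cons, hsum, add_add_add_comm]

lemma exists_add_finset_sum_of_mem_closure_union (hdouble : ∀ p ∈ F, p + p ∈ closure E) {p : A}
    (hp : p ∈ closure (E ∪ F)) :
    ∃ e ∈ closure E, ∃ T : Finset A, ↑T ⊆ F ∧ p = e + ∑ t ∈ T, t := by
  classical
  induction hp using closure_induction_left with
  | zero => exact ⟨0, zero_mem _, ∅, by simp, by simp⟩
  | add_left x hx y _ ih =>
    obtain ⟨e, he, T, hT, rfl⟩ := ih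
    rcases hx with hx | hx
    · exact ⟨x + e, add_mem (subset_closure hx) he, T, hT, (add_assoc _ _ _).symm⟩
    · by_cases hxT : x ∈ T
      · refine ⟨x + x + e, add_mem (hdouble x hx) he, T.erase x,
          (Finset.coe_subset.2 (T.erase_subset x)).trans hT, ?_⟩
        rw [← Finset.add_sum_erase T (fun t => t) hxT]
        abel
      · refine ⟨e, he, insert x T, by simp [Set.insert_subset_iff, hx, hT], ?_⟩
        rw [Finset.sum_insert hxT, add_left_comm]

theorem exists_list_degree_eq_of_mem_closure_union (hE : ∀ p ∈ E, deg p = 1) (hF : F.Finite)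
    (hFM : ∀ p ∈ F, ∃ k : ℕ, k ≤ M ∧ deg p = k) (hdouble : ∀ p ∈ F, p + p ∈ closure E)
    {n : ℕ} (hn : F.ncard ≤ n) {p : A} (hp : p ∈ closure (E ∪ F)) (hdeg : deg p = n * M) :
    ∃ L : List A, L.length = n ∧ (∀ q ∈ L, q ∈ closure (E ∪ F) ∧ deg q = M) ∧ L.sum = p := by
  obtain ⟨e, he, T, hTF, rfl⟩ := exists_add_finset_sum_of_mem_closure_union hdouble hp
  have hcard : T.card ≤ n := (Set.ncard_coe_finset T ▸ Set.ncard_le_ncard hTF hF).trans hn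
  let T' : List A := T.toList ++ List.replicate (n - T.card) 0
  have hlen : T'.length = n := by simp [T', hcard]
  have hsum : T'.sum = ∑ t ∈ T, t := by simp [T']
  have hmem : ∀ t ∈ T', t ∈ F ∨ t = 0 := by
    intro t ht
    rcases List.mem_append.1 ht with ht | ht
    · exact Or.inl (hTF (Finset.mem_toList.1 ht))
    · exact Or.inr (List.eq_of_mem_replicate ht)
  rw [← hsum] at hdeg ⊢
  rw [← hlen] at hdeg ⊢
  refine exists_list_degree_eq_of_add_list_sum hE (fun q hq => subset_closure (Or.inl hq))
    (fun t ht => ?_) (fun t ht => ?_) he hdeg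
  · rcases hmem t ht with ht | rfl
    · exact subset_closure (Or.inr ht)
    · exact zero_mem _
  · rcases hmem t ht with ht | rfl
    · exact hFM t ht
    · exact ⟨0, Nat.zero_le M, by simp⟩

end Regrouping

section Cone

variable {N : ℕ} {P : Set (Pt N)} {p : Pt N × ℝ}

/-- The real cone `C(P)` over `P × {1}`, whose lattice points are `coneLat P`. -/
def realCone (P : Set (Pt N)) : Submodule ℝ≥0 (Pt N × ℝ) :=
  Submodule.span ℝ≥0 ((fun w => (w, (1 : ℝ))) '' P)

lemma mem_coneLat_iff :
    p ∈ coneLat P ↔ p ∈ realCone P ∧ IsLat p.1 ∧ ∃ z : ℤ, p.2 = (z : ℝ) := by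
  refine and_congr ⟨?_, fun h => ?_⟩ Iff.rfl
  · rintro ⟨m, c, w, hcw, hp₁, hp₂⟩
    have hp : p = ∑ i, (⟨c i, (hcw i).1⟩ : ℝ≥0) • (w i, (1 : ℝ)) :=
      Prod.ext (by simp [hp₁, Prod.fst_sum]) (by simp [hp₂, Prod.snd_sum])
    exact hp ▸ sum_mem fun i _ =>
      Submodule.smul_mem _ _ (Submodule.subset_span ⟨w i, (hcw i).2, rfl⟩)
  · obtain ⟨m, c, g, rfl⟩ := Submodule.mem_span_set'.1 h
    choose w hwP hw using fun i => (g i).2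
    refine ⟨m, fun i => c i, w, fun i => ⟨(c i).2, hwP i⟩, ?_, ?_⟩
    · simp [← hw, Prod.fst_sum, NNReal.smul_def]
    · simp [← hw, Prod.snd_sum, NNReal.smul_def]

lemma realCone_convexHull (S : Set (Pt N)) : realCone (convexHull ℝ S) = realCone S := by
  refine le_antisymm (Submodule.span_le.2 ?_)
    (Submodule.span_mono (Set.image_mono (subset_convexHull ℝ S)))
  rintro _ ⟨w, hw, rfl⟩
  have hconvex : Convex ℝ {w : Pt N | (w, (1 : ℝ)) ∈ realCone S} := by
    intro v hv w hw a b ha hb hab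
    have hcomb : (a • v + b • w, (1 : ℝ)) =
        (⟨a, ha⟩ : ℝ≥0) • (v, (1 : ℝ)) + (⟨b, hb⟩ : ℝ≥0) • (w, (1 : ℝ)) :=
      Prod.ext rfl (by simp [hab])
    change (a • v + b • w, (1 : ℝ)) ∈ realCone S
    exact hcomb ▸ add_mem (Submodule.smul_mem _ _ hv) (Submodule.smul_mem _ _ hw)
  have hsub : S ⊆ {w : Pt N | (w, (1 : ℝ)) ∈ realCone S} :=
    fun v hv => Submodule.subset_span ⟨v, hv, rfl⟩
  exact convexHull_min hsub hconvex hw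

lemma isLat_add {x y : Pt N} (hx : IsLat x) (hy : IsLat y) : IsLat (x + y) := fun i => by
  obtain ⟨a, ha⟩ := hx i
  obtain ⟨b, hb⟩ := hy i
  exact ⟨a + b, by simp [ha, hb]⟩

/-- The monoid of lattice points of the cone over `P`. -/
def coneMonoid (P : Set (Pt N)) : AddSubmonoid (Pt N × ℝ) where
  carrier := coneLat P
  zero_mem' := mem_coneLat_iff.2 ⟨zero_mem _, fun _ => ⟨0, by simp⟩, 0, by simp⟩
  add_mem' {p q} hp hq := by
    rw [mem_coneLat_iff] at hp hq ⊢
    obtain ⟨hp, hp_lat, z, hz⟩ := hp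
    obtain ⟨hq, hq_lat, t, ht⟩ := hq
    exact ⟨add_mem hp hq, isLat_add hp_lat hq_lat, z + t, by simp [hz, ht]⟩

lemma mem_latPts_dil_iff (hP : Convex ℝ P) {k : ℕ} (hk : 0 < k) {x : Pt N} :
    x ∈ latPts (dil k P) ↔ (x, (k : ℝ)) ∈ coneLat P := by
  have hk' : (0 : ℝ) < k := Nat.cast_pos.2 hk
  constructor
  · rintro ⟨⟨w, hw, rfl⟩, hlat⟩
    exact ⟨⟨1, fun _ => k, fun _ => w, by simp [hw], by simp, by simp⟩, hlat, k, by simp⟩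
  · rintro ⟨⟨m, c, w, hcw, hx, hsum⟩, hlat, -⟩
    refine ⟨⟨∑ i, (c i / k) • w i, hP.sum_mem (fun i _ => div_nonneg (hcw i).1 hk'.le) ?_
      fun i _ => (hcw i).2, ?_⟩, hlat⟩
    · rw [← Finset.sum_div, ← hsum, div_self hk'.ne']
    · simp only [Finset.smul_sum, smul_smul, mul_div_cancel₀ _ hk'.ne']
      exact hx.symm

lemma dil_dil (k M : ℕ) : dil k (dil M P) = dil (k * M) P := by
  rw [dil, dil, dil, smul_smul, Nat.cast_mul]

lemma decomposesIn_dil_iff (hP : Convex ℝ P) {M : ℕ} (hM : 0 < M) {k : ℕ} {x : Pt N} :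
    DecomposesIn (dil M P) k x ↔ ∃ L : List (Pt N × ℝ), L.length = k ∧
      (∀ q ∈ L, q ∈ coneLat P ∧ q.2 = M) ∧ L.sum = (x, (k * M : ℝ)) := by
  constructor
  · rintro ⟨f, hf, rfl⟩
    refine ⟨List.ofFn fun i => (f i, (M : ℝ)), by simp, fun q hq => ?_, ?_⟩
    · obtain ⟨i, rfl⟩ := List.mem_ofFn.1 hq
      exact ⟨(mem_latPts_dil_iff hP hM).1 (hf i), rfl⟩
    · rw [List.sum_ofFn]
      exact Prod.ext (by simp [Prod.fst_sum]) (by simp [Prod.snd_sum])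
  · rintro ⟨L, rfl, hL, hsum⟩
    refine ⟨fun i => (L.get i).1, fun i => (mem_latPts_dil_iff hP hM).2 ?_, ?_⟩
    · obtain ⟨hmem, hdeg⟩ := hL _ (L.get_mem i)
      exact hdeg ▸ hmem
    · rw [← Prod.fst_sum, ← List.sum_ofFn, List.ofFn_get, hsum]

theorem veryAmple_dil_iff (hP : Convex ℝ P) {M : ℕ} (hM : 0 < M) :
    VeryAmple (dil M P) ↔ ∃ k₀ : ℕ, ∀ k, k₀ ≤ k → ∀ p ∈ coneLat P, p.2 = k * M →
      ∃ L : List (Pt N × ℝ), L.length = k ∧ (∀ q ∈ L, q ∈ coneLat P ∧ q.2 = M) ∧ L.sum = p := by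
  have hdil : ∀ {k : ℕ}, 0 < k → ∀ {x : Pt N},
      x ∈ latPts (dil k (dil M P)) ↔ (x, (k * M : ℝ)) ∈ coneLat P := fun hk x => by
    rw [dil_dil, mem_latPts_dil_iff hP (Nat.mul_pos hk hM), Nat.cast_mul]
  constructor
  · rintro ⟨k₀, h⟩
    refine ⟨k₀ + 1, fun k hk ⟨x, t⟩ hp ht => ?_⟩
    obtain rfl : t = k * M := ht
    exact (decomposesIn_dil_iff hP hM).1 (h k (by lia) x ((hdil (by lia)).2 hp))
  · rintro ⟨k₀, h⟩
    refine ⟨k₀ + 1, fun k hk x hx => (decomposesIn_dil_iff hP hM).2 ?_⟩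
    exact h k (by lia) _ ((hdil (by lia)).1 hx) rfl

theorem veryAmple_dil_of_coneMonoid_eq_closure (hP : Convex ℝ P) {E F : Set (Pt N × ℝ)} {M : ℕ}
    (hM : 0 < M) (hcone : coneMonoid P = AddSubmonoid.closure (E ∪ F)) (hE : ∀ p ∈ E, p.2 = 1)
    (hF : F.Finite) (hFM : ∀ p ∈ F, ∃ k : ℕ, k ≤ M ∧ p.2 = k)
    (hdouble : ∀ p ∈ F, p + p ∈ AddSubmonoid.closure E) :
    VeryAmple (dil M P) := by
  refine (veryAmple_dil_iff hP hM).2 ⟨F.ncard, fun n hn p hp hdeg => ?_⟩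
  obtain ⟨L, hlen, hL, hsum⟩ :=
    exists_list_degree_eq_of_mem_closure_union (deg := AddMonoidHom.snd (Pt N) ℝ) hE hF hFM hdouble
      hn (hcone ▸ hp : p ∈ AddSubmonoid.closure (E ∪ F)) hdeg
  exact ⟨L, hlen, fun q hq => ⟨(hcone ▸ (hL q hq).1 : q ∈ coneMonoid P), (hL q hq).2⟩, hsum⟩

end Cone

section EdgeCone

variable {d : ℕ} {G : SimpleGraph (Fin d)} {p : Pt d × ℝ} {M : ℕ}

/-- The vector of a vertex `v` of `G`. Its degree is `1/2`, so that the vector of an edge is a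
point of the edge polytope in degree one. -/
noncomputable def vertexVec (v : Fin d) : Pt d × ℝ := (Pi.single v 1, 1 / 2)

lemma vertexVec_add_vertexVec (a b : Fin d) :
    vertexVec a + vertexVec b = (Pi.single a 1 + Pi.single b 1, 1) :=
  Prod.ext rfl (by norm_num [vertexVec])

lemma walkSum_vertexVec_snd {u v : Fin d} (w : G.Walk u v) :
    (walkSum vertexVec w).2 = w.length / 2 := by
  induction w with
  | nil => simp
  | cons h w ih =>
    rw [walkSum_cons, Prod.snd_add, ih, Walk.length_cons, vertexVec]
    push_cast
    ring

lemma isLat_vertexVec (v : Fin d) : IsLat (vertexVec v).1 := fun i =>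
  ⟨(Pi.single v 1 : Fin d → ℤ) i, by simp [vertexVec, Pi.single_apply]⟩

lemma isLat_walkSum_vertexVec {u v : Fin d} (w : G.Walk u v) : IsLat (walkSum vertexVec w).1 := by
  induction w with
  | nil => exact fun i => ⟨0, by simp⟩
  | @cons _ b _ _ w ih =>
    rw [walkSum_cons]
    exact isLat_add (isLat_vertexVec b) ih

lemma walkSum_vertexVec_fst_of_isCycle {u : Fin d} {c : G.Walk u u} (hc : c.IsCycle) (i : Fin d) :
    (walkSum vertexVec c).1 i = if i ∈ c.support then 1 else 0 := by
  rw [walkSum_eq_sum_of_isCycle hc, Prod.fst_sum, Finset.sum_apply]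
  simp [vertexVec, Pi.single_apply]

lemma realCone_edgePolytope (G : SimpleGraph (Fin d)) :
    realCone (edgePolytope G) = Submodule.span ℝ≥0 (edgeSums G vertexVec) := by
  rw [edgePolytope, realCone_convexHull, realCone]
  congr 1
  have hsingle : ∀ a b : Fin d, (fun k => (if k = a then (1 : ℝ) else 0) + if k = b then 1 else 0) =
      Pi.single a 1 + Pi.single b 1 := fun a b => by
    ext k
    simp [Pi.single_apply]
  ext q
  simp only [Set.mem_image, edgeSums, vertexVec_add_vertexVec, hsingle]
  constructor
  · rintro ⟨_, ⟨a, b, hab, rfl⟩, rfl⟩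
    exact ⟨a, b, hab, rfl⟩
  · rintro ⟨a, b, hab, rfl⟩
    exact ⟨_, ⟨a, b, hab, rfl⟩, rfl⟩

lemma exists_isFractionalMatching_of_mem_realCone (hp : p ∈ realCone (edgePolytope G)) :
    ∃ m, IsFractionalMatching G p.1 m := by
  rw [realCone_edgePolytope] at hp
  induction hp using Submodule.span_induction with
  | mem q hq =>
    obtain ⟨a, b, hab, rfl⟩ := hq
    exact ⟨_, IsFractionalMatching.single hab⟩
  | zero => exact ⟨0, .zero⟩
  | add q r _ _ hq hr =>
    obtain ⟨m, hm⟩ := hq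
    obtain ⟨n, hn⟩ := hr
    exact ⟨m + n, hm.add hn⟩
  | smul r q _ hq =>
    obtain ⟨m, hm⟩ := hq
    exact ⟨(r : ℝ) • m, hm.smul r.2⟩

lemma sum_eq_two_mul_degree_of_mem_realCone (hp : p ∈ realCone (edgePolytope G)) :
    ∑ v, p.1 v = 2 * p.2 := by
  rw [realCone_edgePolytope] at hp
  induction hp using Submodule.span_induction with
  | mem q hq =>
    obtain ⟨a, b, -, rfl⟩ := hq
    rw [vertexVec_add_vertexVec]
    norm_num [Finset.sum_add_distrib]
  | zero => simp
  | add q r _ _ hq hr => simp [Finset.sum_add_distrib, hq, hr, mul_add]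
  | smul r q _ hq => simp [NNReal.smul_def, ← Finset.mul_sum, hq, mul_left_comm]

lemma edgeSums_subset_coneLat (G : SimpleGraph (Fin d)) :
    edgeSums G vertexVec ⊆ coneLat (edgePolytope G) := by
  intro q hq
  refine mem_coneLat_iff.2 ⟨realCone_edgePolytope G ▸ Submodule.subset_span hq, ?_⟩
  obtain ⟨a, b, -, rfl⟩ := hq
  exact ⟨isLat_add (isLat_vertexVec a) (isLat_vertexVec b), 1, by simp [vertexVec_add_vertexVec]⟩

lemma edgeSum_degree : ∀ p ∈ edgeSums G vertexVec, p.2 = 1 := by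
  rintro _ ⟨a, b, -, rfl⟩
  rw [vertexVec_add_vertexVec]

lemma exceptionalSum_degree {u v : Fin d} {c : G.Walk u u} {c' : G.Walk v v}
    (h : ExceptionalPair c c') :
    (walkSum vertexVec c + walkSum vertexVec c').2 = ((c.length + c'.length) / 2 : ℕ) := by
  rw [Nat.cast_div (h.1.2.add_odd h.2.1.2).two_dvd two_ne_zero, Prod.snd_add,
    walkSum_vertexVec_snd, walkSum_vertexVec_snd, Nat.cast_add, add_div, Nat.cast_ofNat]

lemma add_self_mem_closure_of_mem_exceptionalSums :
    ∀ p ∈ exceptionalSums G vertexVec, p + p ∈ AddSubmonoid.closure (edgeSums G vertexVec) := by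
  rintro _ ⟨u, v, c, c', -, -, -, rfl⟩
  rw [add_add_add_comm]
  exact add_mem (walkSum_add_self_mem_closure c) (walkSum_add_self_mem_closure c')

lemma exceptionalSums_subset_coneLat (G : SimpleGraph (Fin d)) :
    exceptionalSums G vertexVec ⊆ coneLat (edgePolytope G) := by
  intro q hq
  have hcone : q + q ∈ realCone (edgePolytope G) := by
    rw [realCone_edgePolytope]
    exact closure_le (S := (Submodule.span ℝ≥0 (edgeSums G vertexVec)).toAddSubmonoid).2
      Submodule.subset_span (add_self_mem_closure_of_mem_exceptionalSums q hq)
  have hhalf : q = (2⁻¹ : ℝ≥0) • (q + q) := by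
    rw [← two_smul ℝ≥0 q, smul_smul, inv_mul_cancel₀ two_ne_zero, one_smul]
  refine mem_coneLat_iff.2 ⟨hhalf ▸ Submodule.smul_mem _ _ hcone, ?_⟩
  obtain ⟨u, v, c, c', hpair, -, -, rfl⟩ := hq
  exact ⟨isLat_add (isLat_walkSum_vertexVec c) (isLat_walkSum_vertexVec c'),
    ((c.length + c'.length) / 2 : ℕ), by rw [exceptionalSum_degree hpair, Int.cast_natCast]⟩

lemma mem_closure_of_mem_coneLat (hp : p ∈ coneLat (edgePolytope G)) :
    p ∈ AddSubmonoid.closure (edgeSums G vertexVec ∪ oddCycleSums G vertexVec) := by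
  obtain ⟨hcone, hlat, -⟩ := mem_coneLat_iff.1 hp
  obtain ⟨m, hm⟩ := exists_isFractionalMatching_of_mem_realCone hcone
  have hnat : ∀ v, ∃ n : ℕ, p.1 v = n := fun v => by
    obtain ⟨z, hz⟩ := hlat v
    have hnonneg : 0 ≤ z := by exact_mod_cast hz ▸ hm.value_nonneg v
    lift z to ℕ using hnonneg
    exact ⟨z, by simpa using hz⟩
  choose α hα using hnat
  have hsum : p = ∑ v, α v • vertexVec v := by
    refine Prod.ext (funext fun i => ?_) ?_
    · simp [hα, vertexVec, Prod.fst_sum, Pi.single_apply]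
    · have hdeg := sum_eq_two_mul_degree_of_mem_realCone hcone
      simp only [hα] at hdeg
      simp only [vertexVec, Prod.snd_sum, Prod.smul_mk, nsmul_eq_mul, ← Finset.sum_mul, hdeg]
      ring
  exact hsum ▸ IsFractionalMatching.sum_nsmul_mem_closure (funext hα ▸ hm) vertexVec

-- A minimal odd cycle left over on its own has a half-integral degree.
theorem coneMonoid_edgePolytope (G : SimpleGraph (Fin d)) :
    coneMonoid (edgePolytope G) =
      AddSubmonoid.closure (edgeSums G vertexVec ∪ exceptionalSums G vertexVec) := by
  have hle : AddSubmonoid.closure (edgeSums G vertexVec ∪ exceptionalSums G vertexVec) ≤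
      coneMonoid (edgePolytope G) := (closure_le (S := coneMonoid (edgePolytope G))).2
    (Set.union_subset (edgeSums_subset_coneLat G) (exceptionalSums_subset_coneLat G))
  refine le_antisymm (fun p hp => ?_) hle
  rcases mem_closure_or_exists_oddCycleSum_add (mem_closure_of_mem_coneLat hp) with
    h | ⟨_, ⟨u, c, hc, -, rfl⟩, q, hq, rfl⟩
  · exact h
  · obtain ⟨-, -, z, hz⟩ := hp
    obtain ⟨-, -, t, ht⟩ := hle hq
    rw [Prod.snd_add, walkSum_vertexVec_snd, ht] at hz
    have hlen : (c.length : ℤ) = 2 * (z - t) := by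
      have : (c.length : ℝ) = 2 * (z - t) := by linarith
      exact_mod_cast this
    exact absurd hc.2 (by grind)

lemma value_nonneg_of_mem_coneLat (hp : p ∈ coneLat (edgePolytope G)) (v : Fin d) : 0 ≤ p.1 v := by
  obtain ⟨m, hm⟩ := exists_isFractionalMatching_of_mem_realCone (mem_coneLat_iff.1 hp).1
  exact hm.value_nonneg v

section ExceptionalPair

variable {u v : Fin d} {c : G.Walk u u} {c' : G.Walk v v}

theorem length_add_length_le_two_mul_degree (hpair : ExceptionalPair c c') (hc : Chordless c)
    (hc' : Chordless c') (hp : p ∈ coneLat (edgePolytope G)) (hodd : IsOddOnPair c c' p.1) :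
    (c.length + c'.length : ℝ) ≤ 2 * p.2 := by
  obtain ⟨hcone, hlat, z, hz⟩ := mem_coneLat_iff.1 hp
  obtain ⟨m, hm⟩ := exists_isFractionalMatching_of_mem_realCone hcone
  rw [← sum_eq_two_mul_degree_of_mem_realCone hcone]
  exact hm.length_add_length_le_sum hpair hc hc' hodd hlat
    ⟨z, by rw [sum_eq_two_mul_degree_of_mem_realCone hcone, hz]⟩

lemma isOddOnPair_or_of_add {q : Pt d × ℝ} (hp : p ∈ coneLat (edgePolytope G))
    (hq : q ∈ coneLat (edgePolytope G)) (hodd : IsOddOnPair c c' (p + q).1) :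
    IsOddOnPair c c' p.1 ∨ IsOddOnPair c c' q.1 := by
  obtain ⟨hsupp, t, ht, hsum⟩ := hodd
  have hzero : ∀ i, i ∉ c.support → i ∉ c'.support → p.1 i = 0 ∧ q.1 i = 0 := fun i hi hi' =>
    (add_eq_zero_iff_of_nonneg (value_nonneg_of_mem_coneLat hp i)
      (value_nonneg_of_mem_coneLat hq i)).1 (hsupp i hi hi')
  choose y hy using hp.2.1
  choose z hz using hq.2.1
  have hsum_p : ∑ i ∈ c.support.toFinset, p.1 i = (∑ i ∈ c.support.toFinset, y i : ℤ) := by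
    simp [hy]
  have hsum_q : ∑ i ∈ c.support.toFinset, q.1 i = (∑ i ∈ c.support.toFinset, z i : ℤ) := by
    simp [hz]
  simp only [Prod.fst_add, Pi.add_apply, Finset.sum_add_distrib, hsum_p, hsum_q] at hsum
  norm_cast at hsum
  rcases Int.even_or_odd (∑ i ∈ c.support.toFinset, y i) with hy_even | hy_odd
  · exact Or.inr ⟨fun i hi hi' => (hzero i hi hi').2, _, by grind, hsum_q⟩
  · exact Or.inl ⟨fun i hi hi' => (hzero i hi hi').1, _, hy_odd, hsum_p⟩

theorem exists_length_add_length_le_of_mem_closure (hpair : ExceptionalPair c c') (hc : Chordless c)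
    (hc' : Chordless c') {S : Set (Pt d × ℝ)} (hS : S ⊆ coneLat (edgePolytope G))
    (hp : p ∈ AddSubmonoid.closure S) (hodd : IsOddOnPair c c' p.1) :
    ∃ q ∈ S, (c.length + c'.length : ℝ) ≤ 2 * q.2 := by
  induction hp using closure_induction_left with
  | zero =>
    obtain ⟨-, t, ht, hsum⟩ := hodd
    obtain rfl : t = 0 := by simpa using hsum.symm
    exact absurd ht (by decide)
  | add_left x hx y hy ih =>
    have hy_cone : y ∈ coneMonoid (edgePolytope G) :=
      (closure_le (S := coneMonoid (edgePolytope G))).2 hS hy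
    rcases isOddOnPair_or_of_add (hS hx) hy_cone hodd with hodd_x | hodd_y
    · exact ⟨x, hx, length_add_length_le_two_mul_degree hpair hc hc' (hS hx) hodd_x⟩
    · exact ih hodd_y

lemma isOddOnPair_exceptionalSum (hpair : ExceptionalPair c c') :
    IsOddOnPair c c' (walkSum vertexVec c + walkSum vertexVec c').1 := by
  obtain ⟨hc, hc', hdisj, -⟩ := hpair
  have hvalue : ∀ i, (walkSum vertexVec c + walkSum vertexVec c').1 i =
      (if i ∈ c.support then 1 else 0) + if i ∈ c'.support then 1 else 0 := fun i => by
    rw [Prod.fst_add, Pi.add_apply, walkSum_vertexVec_fst_of_isCycle hc.1,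
      walkSum_vertexVec_fst_of_isCycle hc'.1]
  refine ⟨fun i hi hi' => by simp [hvalue, hi, hi'], c.length, by exact_mod_cast hc.2, ?_⟩
  rw [Int.cast_natCast, ← card_support_toFinset hc.1, Finset.card_eq_sum_ones, Nat.cast_sum]
  refine Finset.sum_congr rfl fun i hi => ?_
  have hi : i ∈ c.support := List.mem_toFinset.1 hi
  simp [hvalue, hi, hdisj i hi]

lemma isOddOnPair_add_nsmul_edgeSum {a b : Fin d} (ha : a ∈ c.support) (hb : b ∈ c.support) (j : ℕ)
    (hodd : IsOddOnPair c c' p.1) :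
    IsOddOnPair c c' (p + j • (vertexVec a + vertexVec b)).1 := by
  obtain ⟨hsupp, t, ht, hsum⟩ := hodd
  refine ⟨fun i hi hi' => ?_, t + 2 * j, by grind, ?_⟩
  · have hia : i ≠ a := fun h => hi (h ▸ ha)
    have hib : i ≠ b := fun h => hi (h ▸ hb)
    simp [vertexVec, hsupp i hi hi', hia, hib]
  · have hsingle : ∀ x ∈ c.support, ∑ i ∈ c.support.toFinset, (Pi.single x 1 : Pt d) i = 1 :=
      fun x hx => by simp [Pi.single_apply, hx]
    simp only [vertexVec_add_vertexVec, Prod.fst_add, Prod.smul_fst, Pi.add_apply, Pi.smul_apply,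
      Finset.sum_add_distrib, ← Finset.smul_sum, hsum, hsingle a ha, hsingle b hb]
    push_cast
    ring

-- Adding an edge of `c` raises the degree by one and preserves oddness on the pair, so there are
-- odd points in all degrees beyond that of `e(c, c')`.
theorem length_add_length_le_of_veryAmple_dil (hpair : ExceptionalPair c c') (hc : Chordless c)
    (hc' : Chordless c') {k : ℕ} (hk : 0 < k) (hva : VeryAmple (dil k (edgePolytope G))) :
    c.length + c'.length ≤ 2 * k := by
  obtain ⟨k₀, hk₀⟩ := (veryAmple_dil_iff (convex_convexHull ℝ _) hk).1 hva
  set D := (c.length + c'.length) / 2 with hD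
  have hDn : D ≤ (k₀ + D) * k := by nlinarith
  have hedge : G.Adj u c.snd := c.adj_snd hpair.1.1.not_nil
  set p := walkSum vertexVec c + walkSum vertexVec c' +
    ((k₀ + D) * k - D) • (vertexVec u + vertexVec c.snd) with hp
  have hp_cone : p ∈ coneMonoid (edgePolytope G) :=
    add_mem (exceptionalSums_subset_coneLat G ⟨u, v, c, c', hpair, hc, hc', rfl⟩)
      (nsmul_mem (edgeSums_subset_coneLat G ⟨u, c.snd, hedge, rfl⟩) _)
  have hp_deg : p.2 = (k₀ + D : ℕ) * k := by
    rw [hp, Prod.snd_add, exceptionalSum_degree hpair, Prod.smul_snd, vertexVec_add_vertexVec]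
    simp [Nat.cast_sub hDn, ← hD]
  obtain ⟨L, -, hL, hsum⟩ := hk₀ (k₀ + D) (by lia) p hp_cone hp_deg
  have hp_closure : p ∈ AddSubmonoid.closure {q ∈ coneLat (edgePolytope G) | q.2 = k} :=
    hsum ▸ list_sum_mem fun q hq => subset_closure (hL q hq)
  obtain ⟨q, hq, hle⟩ := exists_length_add_length_le_of_mem_closure hpair hc hc'
    (Set.sep_subset _ _) hp_closure
    (isOddOnPair_add_nsmul_edgeSum c.start_mem_support (c.getVert_mem_support 1) _
      (isOddOnPair_exceptionalSum hpair))
  rw [hq.2] at hle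
  exact_mod_cast hle

end ExceptionalPair

lemma subset_of_isMinHilbertBasis {H : Set (Pt d × ℝ)}
    (hH : IsMinHilbertBasis (edgePolytope G) H) :
    H ⊆ edgeSums G vertexVec ∪ exceptionalSums G vertexVec :=
  hH.2 _ ⟨edgeSums_finite.union exceptionalSums_finite,
    Set.union_subset (edgeSums_subset_coneLat G) (exceptionalSums_subset_coneLat G),
    (coneMonoid_edgePolytope G).le⟩

lemma degree_le_of_isMinHilbertBasis (hM : 0 < M)
    (hdeg : ∀ p ∈ exceptionalSums G vertexVec, ∃ k ≤ M, p.2 = (k : ℝ)) {H : Set (Pt d × ℝ)}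
    (hH : IsMinHilbertBasis (edgePolytope G) H) (hp : p ∈ H) : p.2 ≤ M := by
  rcases subset_of_isMinHilbertBasis hH hp with hp | hp
  · rw [edgeSum_degree p hp]
    exact_mod_cast hM
  · obtain ⟨k, hk, hpk⟩ := hdeg p hp
    exact hpk ▸ Nat.cast_le.2 hk

end EdgeCone

end EdgePolytope

open EdgePolytope in
theorem va_and_hilb_of_edgePolytope_general {d : ℕ} (G : SimpleGraph (Fin d)) (M : ℕ)
    (hM : IsGreatest {m : ℕ | ∃ (u v : Fin d) (c : G.Walk u u) (c' : G.Walk v v),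
      ExceptionalPair c c' ∧ Chordless c ∧ Chordless c' ∧
      m = (c.length + c'.length) / 2} M) :
    IsLeast {k : ℕ | 0 < k ∧ VeryAmple (dil k (edgePolytope G))} M ∧
    ∀ H, IsMinHilbertBasis (edgePolytope G) H →
      IsGreatest {t : ℝ | ∃ p ∈ H, p.2 = t} (M : ℝ) := by
  obtain ⟨⟨u, v, c, c', hpair, hc, hc', hM_eq⟩, hmax⟩ := hM
  have hM_length : c.length + c'.length = 2 * M := by
    rw [hM_eq, Nat.two_mul_div_two_of_even (hpair.1.2.add_odd hpair.2.1.2)]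
  have hM_pos : 0 < M := by have := hpair.1.1.three_le_length; lia
  have hdeg : ∀ p ∈ exceptionalSums G vertexVec, ∃ k ≤ M, p.2 = (k : ℝ) := by
    rintro _ ⟨_, _, b, b', hb_pair, hb, hb', rfl⟩
    exact ⟨_, hmax ⟨_, _, b, b', hb_pair, hb, hb', rfl⟩, exceptionalSum_degree hb_pair⟩
  refine ⟨⟨⟨hM_pos, veryAmple_dil_of_coneMonoid_eq_closure (convex_convexHull ℝ _) hM_pos
    (coneMonoid_edgePolytope G) edgeSum_degree exceptionalSums_finite hdeg
    add_self_mem_closure_of_mem_exceptionalSums⟩, fun k hk => ?_⟩, fun H hH => ?_⟩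
  · have := length_add_length_le_of_veryAmple_dil hpair hc hc' hk.1 hk.2
    lia
  · obtain ⟨q, hqH, hq⟩ := exists_length_add_length_le_of_mem_closure hpair hc hc' hH.1.2.1
      (hH.1.2.2 (exceptionalSums_subset_coneLat G ⟨u, v, c, c', hpair, hc, hc', rfl⟩))
      (isOddOnPair_exceptionalSum hpair)
    rw [← Nat.cast_add, hM_length, Nat.cast_mul, Nat.cast_ofNat] at hq
    have hH_le : ∀ p ∈ H, p.2 ≤ M := fun p => degree_le_of_isMinHilbertBasis hM_pos hdeg hH
    refine ⟨⟨q, hqH, le_antisymm (hH_le q hqH) (by linarith)⟩, ?_⟩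
    rintro _ ⟨p, hpH, rfl⟩
    exact hH_le p hpH

/-- for a connected graph `G` not satisfying the odd cycle condition,
`μ_va(P_G) = μ_Hilb(P_G) = max{(ℓ(C)+ℓ(C'))/2 : (C,C') exceptional pair of minimal
odd cycles}`. -/
theorem va_and_hilb_of_edgePolytope {d : ℕ} (G : SimpleGraph (Fin d))
    (hconn : G.Connected) (hocc : ¬ OddCycleCondition G)
    (M : ℕ)
    (hM : IsGreatest {m : ℕ | ∃ (u v : Fin d) (c : G.Walk u u) (c' : G.Walk v v),
      ExceptionalPair c c' ∧ Chordless c ∧ Chordless c' ∧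
      m = (c.length + c'.length) / 2} M) :
    IsLeast {k : ℕ | 0 < k ∧ VeryAmple (dil k (edgePolytope G))} M ∧
    ∀ H, IsMinHilbertBasis (edgePolytope G) H →
      IsGreatest {t : ℝ | ∃ p ∈ H, p.2 = t} (M : ℝ) :=
  va_and_hilb_of_edgePolytope_general G M hM
end

section
/- For any connected simple graph G, the edge polytope P_G possesses the integer decomposition property if and only if G satisfies the odd cycle condition (every pair of distinct odd cycles either shares a vertex or is joined by an edge). -/
open scoped BigOperators Pointwise

/-!
A lattice point with nonnegative coordinates is a multiset of vertices. Every point of `kP_G`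
satisfies the linear inequalities saying that no set of vertices outweighs its neighbourhood. For a
multiset of vertices these are the inequalities of Hall's marriage theorem, which yields a
permutation of the multiset moving each vertex to a neighbour; its cycles partition the multiset
into closed walks. Conversely, going around a closed walk twice uses a multiset of vertices that
splits into edges. So the lattice points of `kP_G` are the multisets of size `2k` that split into
closed walks, while the sums of `k` lattice points of `P_G` are those that split into edges.

A closed walk of even length splits into edges, and so does a pair of odd closed walks joined by an
edge, which the odd cycle condition always provides. Conversely, if two disjoint odd cycles are not
joined by an edge, their union does not split into edges, as every edge inside it contains an even
number of vertices of the first cycle.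
-/

open SimpleGraph

section OddCycles

variable {V : Type*} {G : SimpleGraph V} {u v : V}

theorem isOddCycle_cons_of_isPath (h : G.Adj u v) {q : G.Walk v u} (hq : q.IsPath)
    (heven : Even q.length) : IsOddCycle (q.cons h) := by
  refine ⟨(Walk.cons_isCycle_iff q h).2 ⟨hq, fun hmem ↦ ?_⟩, by simpa using heven.add_one⟩
  have hone : q.length = 1 := hq.length_eq_one_of_mem_edges (by rwa [Sym2.eq_swap])
  simp [hone] at heven

theorem exists_isOddCycle_of_odd_length_add_bypass [DecidableEq V] (p : G.Walk u v)
    (hodd : Odd (p.length + p.bypass.length)) :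
    ∃ (a : V) (c : G.Walk a a), IsOddCycle c ∧ c.support ⊆ p.support := by
  induction p with
  | nil => simp [Walk.bypass] at hodd
  | @cons u v w h p ih =>
    by_cases hp : Odd (p.length + p.bypass.length)
    · obtain ⟨a, c, hc, hsub⟩ := ih hp
      exact ⟨a, c, hc, List.Subset.trans hsub (p.support.subset_cons_self u)⟩
    by_cases hu : u ∈ p.bypass.support
    · have hsplit := congrArg Walk.length (p.bypass.take_spec hu)
      simp only [Walk.length_append] at hsplit
      simp only [Walk.bypass, hu, ↓reduceDIte, Walk.length_cons] at hodd
      have heven : Even (p.bypass.takeUntil u hu).length := by grind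
      refine ⟨u, _, isOddCycle_cons_of_isPath h (p.bypass_isPath.takeUntil hu) heven, ?_⟩
      rw [Walk.support_cons, Walk.support_cons]
      exact List.cons_subset_cons u (List.Subset.trans
        (p.bypass.support_takeUntil_subset_support hu) p.support_bypass_subset_support)
    · simp only [Walk.bypass, hu, ↓reduceDIte, Walk.length_cons] at hodd
      grind

theorem exists_isOddCycle_of_odd_length (p : G.Walk u u) (hp : Odd p.length) :
    ∃ (a : V) (c : G.Walk a a), IsOddCycle c ∧ c.support ⊆ p.support := by
  classical
  have hnil : p.bypass.length = 0 :=
    Walk.length_eq_zero_iff.2 (Walk.isPath_iff_nil.1 p.bypass_isPath)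
  exact exists_isOddCycle_of_odd_length_add_bypass p (by rwa [hnil, add_zero])

theorem not_nil_of_odd_length {p : G.Walk u v} (hp : Odd p.length) : ¬ p.Nil :=
  Walk.not_nil_iff_lt_length.2 hp.pos

theorem exists_adj_of_odd_closed_walks (hG : OddCycleCondition G) {p : G.Walk u u}
    {q : G.Walk v v} (hp : Odd p.length) (hq : Odd q.length) :
    ∃ a ∈ p.support, ∃ b ∈ q.support, G.Adj a b := by
  classical
  by_cases hshare : ∃ a, a ∈ p.support ∧ a ∈ q.support
  · obtain ⟨a, hap, haq⟩ := hshare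
    have hnil : ¬ (q.rotate a haq).Nil := not_nil_of_odd_length (by simpa using hq)
    exact ⟨a, hap, _, (q.mem_support_rotate_iff a haq).1 (Walk.getVert_mem_support _ 1),
      Walk.adj_snd hnil⟩
  · obtain ⟨a, c, hc, hcp⟩ := exists_isOddCycle_of_odd_length p hp
    obtain ⟨b, c', hc', hcq⟩ := exists_isOddCycle_of_odd_length q hq
    obtain ⟨x, y, hx, hy, hxy⟩ :=
      hG a b c c' hc hc' fun x hx hx' ↦ hshare ⟨x, hcp hx, hcq hx'⟩
    exact ⟨x, hcp hx, y, hcq hy, hxy⟩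

end OddCycles

section Monoids

variable {V : Type*} {G : SimpleGraph V} {u v a b : V} {m : Multiset V}

/-- The edges of `G`, each viewed as the multiset of its two endpoints. -/
def edgePairs (G : SimpleGraph V) : Set (Multiset V) :=
  {s | ∃ a b, G.Adj a b ∧ s = {a, b}}

/-- The multisets of vertices that can be partitioned into edges of `G`: the combinatorial form of
the monoid generated by the vertices of the edge polytope. -/
def edgeMonoid (G : SimpleGraph V) : AddSubmonoid (Multiset V) :=
  AddSubmonoid.closure (edgePairs G)

/-- The multisets of vertices that can be partitioned into closed walks of `G`: the combinatorial
form of the monoid of lattice points of the cone over the edge polytope. The base point of a walk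
is counted once, hence the `tail`. -/
def closedWalkMonoid (G : SimpleGraph V) : AddSubmonoid (Multiset V) :=
  AddSubmonoid.closure {s | ∃ (u : V) (p : G.Walk u u), s = p.support.tail}

theorem pair_mem_edgeMonoid (h : G.Adj a b) : ({a, b} : Multiset V) ∈ edgeMonoid G :=
  AddSubmonoid.subset_closure ⟨a, b, h, rfl⟩

theorem tail_support_mem_closedWalkMonoid (p : G.Walk u u) :
    (p.support.tail : Multiset V) ∈ closedWalkMonoid G :=
  AddSubmonoid.subset_closure ⟨u, p, rfl⟩

theorem card_eq_two_of_mem_edgePairs {s : Multiset V} (hs : s ∈ edgePairs G) : s.card = 2 := by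
  obtain ⟨a, b, -, rfl⟩ := hs
  exact Multiset.card_pair a b

theorem mem_edgeMonoid_and_card_eq_iff {k : ℕ} :
    m ∈ edgeMonoid G ∧ m.card = 2 * k ↔
      ∃ s : Fin k → Multiset V, (∀ i, s i ∈ edgePairs G) ∧ m = ∑ i, s i := by
  have card_sum {n : ℕ} {s : Fin n → Multiset V} (hs : ∀ i, s i ∈ edgePairs G) :
      (∑ i, s i).card = 2 * n := by
    simp [Multiset.card_sum, card_eq_two_of_mem_edgePairs (hs _), mul_comm]
  constructor
  · rintro ⟨hm, hcard⟩
    obtain ⟨l, hl, rfl⟩ := AddSubmonoid.exists_list_of_mem_closure hm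
    have hget (i : Fin l.length) : l.get i ∈ edgePairs G := hl _ (l.get_mem i)
    have hsum : l.sum = ∑ i, l.get i := by rw [← List.sum_ofFn, List.ofFn_get]
    obtain rfl : l.length = k := by
      rw [hsum, card_sum hget] at hcard
      lia
    exact ⟨l.get, hget, hsum⟩
  · rintro ⟨s, hs, rfl⟩
    exact ⟨sum_mem fun i _ ↦ AddSubmonoid.subset_closure (hs i), card_sum hs⟩

theorem even_countP_of_mem_edgeMonoid {P : V → Prop} [DecidablePred P] (hm : m ∈ edgeMonoid G)
    (hP : ∀ a ∈ m, ∀ b ∈ m, G.Adj a b → (P a ↔ P b)) : Even (m.countP P) := by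
  induction hm using AddSubmonoid.closure_induction with
  | zero => simp
  | mem s hs =>
    obtain ⟨a, b, hab, rfl⟩ := hs
    have hiff : P a ↔ P b := hP a (by simp) b (by simp) hab
    by_cases hb : P b <;> simp [← Multiset.cons_zero, hiff, hb]
  | add s t _ _ ihs iht =>
    rw [Multiset.countP_add]
    exact (ihs fun a ha b hb ↦ hP a (by simp [ha]) b (by simp [hb])).add
      (iht fun a ha b hb ↦ hP a (by simp [ha]) b (by simp [hb]))

theorem even_card_of_mem_edgeMonoid (hm : m ∈ edgeMonoid G) : Even m.card := by
  simpa using even_countP_of_mem_edgeMonoid (P := fun _ ↦ True) hm (by simp)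

theorem walk_support_mem_edgeMonoid (p : G.Walk u v) :
    (Odd p.length → (p.support : Multiset V) ∈ edgeMonoid G) ∧
      (Even p.length → (p.support.tail : Multiset V) ∈ edgeMonoid G) := by
  induction p with
  | nil => simp
  | @cons u v w h p ih =>
    simp only [Walk.length_cons, Walk.support_cons, List.tail_cons]
    refine ⟨fun hodd ↦ ?_, fun heven ↦ ih.1 (by grind)⟩
    have hsplit : (↑(u :: p.support) : Multiset V) = {u, v} + ↑p.support.tail := by
      rw [← p.cons_tail_support]
      rfl
    rw [hsplit]
    exact add_mem (pair_mem_edgeMonoid h) (ih.2 (by grind))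

theorem dropLast_add_tail_support_mem_edgeMonoid (p : G.Walk u v) :
    (p.support.dropLast + p.support.tail : Multiset V) ∈ edgeMonoid G := by
  induction p with
  | nil => simp
  | @cons u v w h p ih =>
    have hsplit : ((p.cons h).support.dropLast + (p.cons h).support.tail : Multiset V) =
        {u, v} + (p.support.dropLast + p.support.tail) := by
      rw [Walk.support_cons, List.dropLast_cons_of_ne_nil p.support_ne_nil, List.tail_cons]
      nth_rw 2 [← p.cons_tail_support]
      simp only [← Multiset.cons_coe, ← Multiset.singleton_add, Multiset.insert_eq_cons]
      abel
    rw [hsplit]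
    exact add_mem (pair_mem_edgeMonoid h) ih

theorem two_nsmul_mem_edgeMonoid (hm : m ∈ closedWalkMonoid G) : 2 • m ∈ edgeMonoid G := by
  induction hm using AddSubmonoid.closure_induction with
  | zero => simp
  | mem s hs =>
    obtain ⟨u, p, rfl⟩ := hs
    have hrot : (p.support.tail : Multiset V) = p.support.dropLast :=
      Multiset.coe_eq_coe.2 p.tail_support_perm_dropLast_support
    rw [two_nsmul]
    nth_rw 1 [hrot]
    exact dropLast_add_tail_support_mem_edgeMonoid p
  | add s t _ _ ihs iht => simpa only [nsmul_add] using add_mem ihs iht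

/- Open both closed walks at the ends of the edge `ab`: joined by `ab` they form a single
walk of odd length visiting exactly the vertices of both. -/
theorem tail_support_add_tail_support_mem_edgeMonoid_of_adj {p : G.Walk a a} {q : G.Walk b b}
    (hab : G.Adj a b) (hp : Odd p.length) (hq : Odd q.length) :
    (p.support.tail + q.support.tail : Multiset V) ∈ edgeMonoid G := by
  have hpnil := not_nil_of_odd_length hp
  have hqnil := not_nil_of_odd_length hq
  have hplen := Walk.length_tail_add_one hpnil
  have hqlen := Walk.length_tail_add_one hqnil
  let joined := p.tail.append (q.tail.reverse.cons hab)
  have hjoined : Odd joined.length := by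
    simp only [joined, Walk.length_append, Walk.length_cons, Walk.length_reverse]
    grind
  have hsupport : (joined.support : Multiset V) = p.support.tail + q.support.tail := by
    rw [Walk.support_append, Walk.support_cons, List.tail_cons, Walk.support_reverse,
      ← Multiset.coe_add, Multiset.coe_reverse, Walk.support_tail_of_not_nil _ hpnil,
      Walk.support_tail_of_not_nil _ hqnil]
  exact hsupport ▸ (walk_support_mem_edgeMonoid joined).1 hjoined

theorem OddCycleCondition.tail_support_add_tail_support_mem_edgeMonoid
    (hG : OddCycleCondition G) {p : G.Walk u u} {q : G.Walk v v}
    (hp : Odd p.length) (hq : Odd q.length) :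
    (p.support.tail + q.support.tail : Multiset V) ∈ edgeMonoid G := by
  classical
  obtain ⟨a, ha, b, hb, hab⟩ := exists_adj_of_odd_closed_walks hG hp hq
  rw [← Multiset.coe_eq_coe.2 (p.support_rotate a ha).perm,
    ← Multiset.coe_eq_coe.2 (q.support_rotate b hb).perm]
  exact tail_support_add_tail_support_mem_edgeMonoid_of_adj hab (by simpa using hp)
    (by simpa using hq)

theorem OddCycleCondition.mem_edgeMonoid_or_exists_eq_add_odd_closed_walk (hG : OddCycleCondition G)
    (hm : m ∈ closedWalkMonoid G) :
    m ∈ edgeMonoid G ∨ ∃ s ∈ edgeMonoid G, ∃ (u : V) (p : G.Walk u u),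
      Odd p.length ∧ m = s + p.support.tail := by
  induction hm using AddSubmonoid.closure_induction with
  | zero => exact .inl (zero_mem _)
  | mem s hs =>
    obtain ⟨u, p, rfl⟩ := hs
    rcases Nat.even_or_odd p.length with heven | hodd
    · exact .inl ((walk_support_mem_edgeMonoid p).2 heven)
    · exact .inr ⟨0, zero_mem _, u, p, hodd, by simp⟩
  | add s t _ _ ihs iht =>
    rcases ihs with hs | ⟨s', hs', u, p, hp, rfl⟩ <;> rcases iht with ht | ⟨t', ht', v, q, hq, rfl⟩
    · exact .inl (add_mem hs ht)
    · exact .inr ⟨s + t', add_mem hs ht', v, q, hq, by abel⟩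
    · exact .inr ⟨s' + t, add_mem hs' ht, u, p, hp, by abel⟩
    · left
      rw [add_add_add_comm]
      exact add_mem (add_mem hs' ht') (hG.tail_support_add_tail_support_mem_edgeMonoid hp hq)

theorem card_tail_support (p : G.Walk u v) : (p.support.tail : Multiset V).card = p.length := by
  simp

theorem OddCycleCondition.mem_edgeMonoid (hG : OddCycleCondition G)
    (hm : m ∈ closedWalkMonoid G) (heven : Even m.card) : m ∈ edgeMonoid G := by
  rcases hG.mem_edgeMonoid_or_exists_eq_add_odd_closed_walk hm with h | ⟨s, hs, u, p, hp, rfl⟩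
  · exact h
  · have hs_even := even_card_of_mem_edgeMonoid hs
    rw [Multiset.card_add, card_tail_support] at heven
    grind

theorem hasBridge_of_mem_edgeMonoid {c : G.Walk u u} {c' : G.Walk v v} (hc : Odd c.length)
    (hdisj : VertexDisjoint c c')
    (hm : (c.support.tail + c'.support.tail : Multiset V) ∈ edgeMonoid G) : HasBridge c c' := by
  classical
  by_contra hbridge
  have hmem {a : V} (ha : a ∈ (c.support.tail + c'.support.tail : Multiset V)) :
      a ∈ c.support ∨ a ∈ c'.support := by
    simp only [Multiset.mem_add, Multiset.mem_coe] at ha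
    exact ha.imp List.mem_of_mem_tail List.mem_of_mem_tail
  have heven := even_countP_of_mem_edgeMonoid (P := (· ∈ c.support)) hm fun a ha b hb hab ↦
    ⟨fun hac ↦ (hmem hb).resolve_right fun hbc' ↦ hbridge ⟨a, b, hac, hbc', hab⟩,
      fun hbc ↦ (hmem ha).resolve_right fun hac' ↦ hbridge ⟨b, a, hbc, hac', hab.symm⟩⟩
  have hc_count : (c.support.tail : Multiset V).countP (· ∈ c.support) = c.length := by
    rw [Multiset.countP_eq_card.2 fun a ha ↦ List.mem_of_mem_tail ha, card_tail_support]
  have hc'_count : (c'.support.tail : Multiset V).countP (· ∈ c.support) = 0 :=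
    Multiset.countP_eq_zero.2 fun a ha hac ↦ hdisj a hac (List.mem_of_mem_tail ha)
  rw [Multiset.countP_add, hc_count, hc'_count, add_zero] at heven
  exact Nat.not_even_iff_odd.2 hc heven

theorem oddCycleCondition_iff_mem_edgeMonoid :
    OddCycleCondition G ↔ ∀ m ∈ closedWalkMonoid G, Even m.card → m ∈ edgeMonoid G := by
  refine ⟨fun hG m hm heven ↦ hG.mem_edgeMonoid hm heven,
    fun h u v c c' hc hc' hdisj ↦ hasBridge_of_mem_edgeMonoid hc.2 hdisj (h _ ?_ ?_)⟩
  · exact add_mem (tail_support_mem_closedWalkMonoid c) (tail_support_mem_closedWalkMonoid c')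
  · rw [Multiset.card_add, card_tail_support, card_tail_support]
    exact hc.2.add_odd hc'.2

end Monoids

section Hall

variable {V : Type*} {G : SimpleGraph V} {m : Multiset V}

theorem exists_walk_of_adj_succ {f : ℕ → V} (h : ∀ n, G.Adj (f n) (f (n + 1))) (n : ℕ) :
    ∃ p : G.Walk (f n) (f 0), (p.support.tail : Multiset V) = (Multiset.range n).map f := by
  induction n with
  | zero => exact ⟨.nil, rfl⟩
  | succ n ih =>
    obtain ⟨p, hp⟩ := ih
    refine ⟨p.cons (h n).symm, ?_⟩
    rw [Walk.support_cons, List.tail_cons, ← p.cons_tail_support, ← Multiset.cons_coe, hp,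
      Multiset.range_succ, Multiset.map_cons]

theorem val_support_eq_map_range_of_isCycle {T : Type*} [Fintype T] [DecidableEq T]
    {σ : Equiv.Perm T} (hσ : σ.IsCycle) {t : T} (ht : t ∈ σ.support) :
    σ.support.val = (Multiset.range (orderOf σ)).map fun n ↦ (σ ^ n) t := by
  have htoList : (σ.toList t : Multiset T) = σ.support.val := by
    have hnodup : (σ.toList t : Multiset T).Nodup := Multiset.coe_nodup.2 (σ.nodup_toList t)
    refine (Multiset.Nodup.ext hnodup σ.support.nodup).2 fun s ↦ ?_
    rw [Multiset.mem_coe, Equiv.Perm.mem_toList_iff, Finset.mem_val]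
    exact ⟨fun h ↦ h.1.mem_support_iff.1 h.2,
      fun hs ↦ ⟨hσ.sameCycle (Equiv.Perm.mem_support.1 ht) (Equiv.Perm.mem_support.1 hs), ht⟩⟩
  rw [← htoList, Equiv.Perm.toList, hσ.cycleOf_eq (Equiv.Perm.mem_support.1 ht), ← hσ.orderOf,
    ← List.range_map_iterate, Multiset.range, Multiset.map_coe]
  simp only [Equiv.Perm.iterate_eq_pow]

theorem map_support_mem_closedWalkMonoid_of_isCycle {T : Type*} [Fintype T] [DecidableEq T]
    {π : T → V} {σ : Equiv.Perm T} (hσ : σ.IsCycle)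
    (hadj : ∀ t ∈ σ.support, G.Adj (π t) (π (σ t))) :
    σ.support.val.map π ∈ closedWalkMonoid G := by
  obtain ⟨t, ht⟩ := hσ.nonempty_support
  obtain ⟨p, hp⟩ := exists_walk_of_adj_succ (G := G) (f := fun n ↦ π ((σ ^ n) t)) (fun n ↦ by
    simpa only [pow_succ', Equiv.Perm.mul_apply] using
      hadj _ (Equiv.Perm.pow_apply_mem_support.2 ht)) (orderOf σ)
  have hclosed : π ((σ ^ orderOf σ) t) = π ((σ ^ 0) t) := by rw [pow_orderOf_eq_one, pow_zero]
  rw [val_support_eq_map_range_of_isCycle hσ ht, Multiset.map_map]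
  have hmem := tail_support_mem_closedWalkMonoid (p.copy hclosed rfl)
  rwa [Walk.support_copy, hp] at hmem

theorem map_support_mem_closedWalkMonoid {T : Type*} [Fintype T] [DecidableEq T]
    {π : T → V} {σ : Equiv.Perm T} (hadj : ∀ t ∈ σ.support, G.Adj (π t) (π (σ t))) :
    σ.support.val.map π ∈ closedWalkMonoid G := by
  induction σ using Equiv.Perm.cycle_induction_on with
  | base_one => simp
  | base_cycles σ hσ => exact map_support_mem_closedWalkMonoid_of_isCycle hσ hadj
  | induction_disjoint σ τ hdisj _ ihσ ihτ =>
    have hunion : (σ * τ).support.val = σ.support.val + τ.support.val := by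
      rw [hdisj.support_mul, ← Finset.disjUnion_eq_union _ _ hdisj.disjoint_support]
      rfl
    rw [hunion, Multiset.map_add]
    refine add_mem (ihσ fun t ht ↦ ?_) (ihτ fun t ht ↦ ?_)
    · have hτ : τ t = t := (hdisj t).resolve_left (Equiv.Perm.mem_support.1 ht)
      simpa [hτ] using hadj t (by simpa [hτ] using ht)
    · have hσ : σ (τ t) = τ t := (hdisj (τ t)).resolve_right (by simpa using ht)
      simpa [hσ] using hadj t (by simpa [hσ] using ht)

open Classical in
/-- The Hall condition for a weighting of the vertices of `G`: no set of vertices outweighs its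
neighbourhood. Each inequality is linear in the weighting, so the condition passes to convex hulls,
and for multiplicities of a multiset it is the hypothesis of Hall's marriage theorem. -/
def HallCondition {R : Type*} [AddCommMonoid R] [LE R] [Fintype V] (G : SimpleGraph V)
    (x : V → R) : Prop :=
  ∀ A : Finset V, ∑ a ∈ A, x a ≤ ∑ b with ∃ a ∈ A, G.Adj a b, x b

theorem card_filter_coe_mem [DecidableEq V] (m : Multiset V) (A : Finset V) :
    Finset.card {t : m | ↑t ∈ A} = ∑ a ∈ A, m.count a :=
  calc Finset.card {t : m | ↑t ∈ A} = (m.filter (· ∈ A)).card := by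
        conv_rhs => rw [← m.map_univ_coe, Multiset.filter_map, Multiset.card_map]
        rfl
    _ = ∑ a ∈ A, (m.filter (· ∈ A)).count a :=
        (Multiset.sum_count_eq_card fun _ ha ↦ Multiset.of_mem_filter ha).symm
    _ = ∑ a ∈ A, m.count a := Finset.sum_congr rfl fun _ ha ↦ Multiset.count_filter_of_pos ha

theorem exists_perm_adj_of_hallCondition [Fintype V] [DecidableEq V]
    (h : HallCondition G fun a ↦ m.count a) :
    ∃ σ : Equiv.Perm m, ∀ t : m, G.Adj (t : V) (σ t) := by
  classical
  have hhall (S : Finset m) : S.card ≤ Finset.card {t : m | ∃ s ∈ S, G.Adj (s : V) t} := by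
    let A : Finset V := S.image fun t : m ↦ (t : V)
    let N : Finset V := {b | ∃ a ∈ A, G.Adj a b}
    calc S.card ≤ Finset.card {t : m | ↑t ∈ A} := Finset.card_le_card fun t ht ↦
          (Finset.mem_filter_univ t).2 (Finset.mem_image_of_mem _ ht)
      _ = ∑ a ∈ A, m.count a := card_filter_coe_mem m A
      _ ≤ ∑ b ∈ N, m.count b := by convert h A
      _ = Finset.card {t : m | ↑t ∈ N} := (card_filter_coe_mem m N).symm
      _ ≤ Finset.card {t : m | ∃ s ∈ S, G.Adj (s : V) t} := Finset.card_le_card fun t ht ↦ by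
          simpa only [N, A, Finset.mem_filter_univ, Finset.exists_mem_image] using ht
  obtain ⟨f, hinj, hadj⟩ :=
    (Fintype.all_card_le_filter_rel_iff_exists_injective fun s t : m ↦ G.Adj (s : V) t).1 hhall
  exact ⟨Equiv.ofBijective f (Finite.injective_iff_bijective.1 hinj), hadj⟩

theorem mem_closedWalkMonoid_of_hallCondition [Fintype V] [DecidableEq V]
    (h : HallCondition G fun a ↦ m.count a) : m ∈ closedWalkMonoid G := by
  classical
  obtain ⟨σ, hσ⟩ := exists_perm_adj_of_hallCondition h
  have hsupport : σ.support = Finset.univ :=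
    Finset.eq_univ_iff_forall.2 fun t ↦ Equiv.Perm.mem_support.2 fun hfix ↦
      G.irrefl (hfix ▸ hσ t)
  have hmem := map_support_mem_closedWalkMonoid (G := G) (π := fun t : m ↦ (t : V)) fun t _ ↦ hσ t
  rwa [hsupport, Multiset.map_univ_coe] at hmem

theorem mem_edgePairs_of_hallCondition [Fintype V] [DecidableEq V]
    (h : HallCondition G fun a ↦ m.count a) (hcard : m.card = 2) : m ∈ edgePairs G := by
  obtain ⟨σ, hσ⟩ := exists_perm_adj_of_hallCondition h
  obtain ⟨a, b, rfl⟩ := Multiset.card_eq_two.1 hcard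
  obtain ⟨t, ht⟩ : ∃ t : ({a, b} : Multiset V), (t : V) = a :=
    ⟨⟨a, 0, by simp⟩, rfl⟩
  have hadj : G.Adj a (σ t) := by simpa only [ht] using hσ t
  have hb : (σ t : V) = b := by
    have hmem : (σ t : V) ∈ ({a, b} : Multiset V) := Multiset.coe_mem
    simp only [Multiset.insert_eq_cons, Multiset.mem_cons, Multiset.mem_singleton] at hmem
    exact hmem.resolve_left hadj.ne'
  exact ⟨a, b, hb ▸ hadj, rfl⟩

end Hall

section EdgePolytope

variable {d k : ℕ} {G : SimpleGraph (Fin d)}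

/-- The vector of multiplicities of a multiset of coordinates. These are exactly the lattice points
with nonnegative coordinates. -/
def countVec : Multiset (Fin d) →+ Pt d where
  toFun m i := m.count i
  map_zero' := by ext; simp
  map_add' _ _ := by ext; simp

theorem countVec_apply (m : Multiset (Fin d)) (i : Fin d) : countVec m i = m.count i := rfl

theorem countVec_injective : Function.Injective (countVec (d := d)) := fun _ _ hst ↦
  Multiset.ext.2 fun i ↦ Nat.cast_injective (congrFun hst i)

theorem isLat_countVec (m : Multiset (Fin d)) : IsLat (countVec m) := fun i ↦
  ⟨m.count i, rfl⟩

theorem sum_countVec (m : Multiset (Fin d)) : ∑ i, countVec m i = m.card := by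
  simp only [countVec_apply]
  rw [← Nat.cast_sum, Multiset.sum_count_eq_card fun a _ ↦ Finset.mem_univ a]

theorem exists_countVec_eq {x : Pt d} (hnonneg : 0 ≤ x) (hx : IsLat x) : ∃ m, countVec m = x := by
  have hnat (i : Fin d) : ∃ n : ℕ, x i = n := by
    obtain ⟨z, hz⟩ := hx i
    have hz0 : (0 : ℝ) ≤ z := hz ▸ hnonneg i
    lift z to ℕ using mod_cast hz0
    exact ⟨z, mod_cast hz⟩
  choose n hn using hnat
  refine ⟨∑ i, Multiset.replicate (n i) i, funext fun i ↦ ?_⟩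
  simp [countVec_apply, Multiset.count_sum', Multiset.count_replicate, hn]

theorem edgePolytope_eq_convexHull (G : SimpleGraph (Fin d)) :
    edgePolytope G = convexHull ℝ (countVec '' edgePairs G) := by
  have hpair (i j : Fin d) : countVec {i, j} =
      fun k ↦ (if k = i then (1 : ℝ) else 0) + (if k = j then (1 : ℝ) else 0) := by
    ext k
    simp [countVec_apply, ← Multiset.singleton_add, Multiset.count_singleton]
  refine congrArg (convexHull ℝ) (Set.ext fun x ↦ ?_)
  constructor
  · rintro ⟨i, j, hij, rfl⟩
    exact ⟨{i, j}, ⟨i, j, hij, rfl⟩, hpair i j⟩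
  · rintro ⟨_, ⟨i, j, hij, rfl⟩, rfl⟩
    exact ⟨i, j, hij, hpair i j⟩

theorem convex_setOf_hallCondition {V : Type*} [Fintype V] (G : SimpleGraph V) :
    Convex ℝ {x : V → ℝ | HallCondition G x} := by
  intro x hx y hy a b ha hb _ A
  simp only [Pi.add_apply, Pi.smul_apply, smul_eq_mul, Finset.sum_add_distrib, ← Finset.mul_sum]
  exact add_le_add (mul_le_mul_of_nonneg_left (hx A) ha) (mul_le_mul_of_nonneg_left (hy A) hb)

theorem hallCondition_countVec_of_mem_edgePairs {s : Multiset (Fin d)} (hs : s ∈ edgePairs G) :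
    HallCondition G (countVec s) := by
  obtain ⟨i, j, hij, rfl⟩ := hs
  intro A
  have hsum (B : Finset (Fin d)) : ∑ b ∈ B, countVec {i, j} b =
      (if i ∈ B then (1 : ℝ) else 0) + (if j ∈ B then (1 : ℝ) else 0) := by
    simp [countVec_apply, ← Multiset.singleton_add, Multiset.count_singleton,
      Finset.sum_add_distrib]
  rw [hsum, hsum, add_comm]
  have hj (hjA : j ∈ A) : ∃ a ∈ A, G.Adj a i := ⟨j, hjA, hij.symm⟩
  have hi (hiA : i ∈ A) : ∃ a ∈ A, G.Adj a j := ⟨i, hiA, hij⟩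
  gcongr ?_ + ?_ <;> split_ifs <;> simp_all

theorem nonneg_of_mem_edgePolytope {x : Pt d} (hx : x ∈ edgePolytope G) : 0 ≤ x := by
  rw [edgePolytope_eq_convexHull] at hx
  refine convexHull_min ?_ (convex_Ici (0 : Pt d)) hx
  rintro _ ⟨s, -, rfl⟩ i
  exact Nat.cast_nonneg _

theorem sum_eq_two_of_mem_edgePolytope {x : Pt d} (hx : x ∈ edgePolytope G) : ∑ i, x i = 2 := by
  rw [edgePolytope_eq_convexHull] at hx
  refine convexHull_min (t := {x : Pt d | ∑ i, x i = 2}) ?_ ?_ hx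
  · rintro _ ⟨s, hs, rfl⟩
    simp [sum_countVec, card_eq_two_of_mem_edgePairs hs]
  · exact convex_hyperplane ⟨fun x y ↦ Finset.sum_add_distrib, fun c x ↦ (Finset.mul_sum ..).symm⟩ 2

theorem hallCondition_of_mem_edgePolytope {x : Pt d} (hx : x ∈ edgePolytope G) :
    HallCondition G x := by
  rw [edgePolytope_eq_convexHull] at hx
  refine convexHull_min ?_ (convex_setOf_hallCondition G) hx
  rintro _ ⟨s, hs, rfl⟩
  exact hallCondition_countVec_of_mem_edgePairs hs

theorem exists_hallCondition_of_mem_latPts_dil {x : Pt d}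
    (hx : x ∈ latPts (dil k (edgePolytope G))) :
    ∃ m : Multiset (Fin d),
      countVec m = x ∧ m.card = 2 * k ∧ HallCondition G fun a ↦ m.count a := by
  obtain ⟨⟨y, hy, rfl⟩, hlat⟩ := hx
  obtain ⟨m, hm⟩ :=
    exists_countVec_eq (smul_nonneg k.cast_nonneg (nonneg_of_mem_edgePolytope hy)) hlat
  have happly (i : Fin d) : (m.count i : ℝ) = k * y i := congrFun hm i
  refine ⟨m, hm, ?_, fun A ↦ ?_⟩
  · have hcard : (m.card : ℝ) = k * 2 := by
      rw [← sum_countVec, hm, ← sum_eq_two_of_mem_edgePolytope hy, Finset.mul_sum]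
      rfl
    rw [mul_comm]
    exact_mod_cast hcard
  · have hle : (k : ℝ) * _ ≤ k * _ :=
      mul_le_mul_of_nonneg_left (hallCondition_of_mem_edgePolytope hy A) k.cast_nonneg
    simp only [Finset.mul_sum, ← happly] at hle
    exact_mod_cast hle

theorem latPts_edgePolytope (G : SimpleGraph (Fin d)) :
    latPts (edgePolytope G) = countVec '' edgePairs G := by
  refine Set.Subset.antisymm (fun x hx ↦ ?_) ?_
  · obtain ⟨m, rfl, hcard, hhall⟩ :=
      exists_hallCondition_of_mem_latPts_dil (k := 1) (by simpa [dil] using hx)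
    exact ⟨m, mem_edgePairs_of_hallCondition hhall hcard, rfl⟩
  · rintro _ ⟨s, hs, rfl⟩
    rw [edgePolytope_eq_convexHull]
    exact ⟨subset_convexHull ℝ _ ⟨s, hs, rfl⟩, isLat_countVec s⟩

theorem decomposesIn_edgePolytope_iff {m : Multiset (Fin d)} :
    DecomposesIn (edgePolytope G) k (countVec m) ↔ m ∈ edgeMonoid G ∧ m.card = 2 * k := by
  rw [mem_edgeMonoid_and_card_eq_iff, DecomposesIn, latPts_edgePolytope]
  constructor
  · rintro ⟨f, hf, hsum⟩
    choose s hs hsf using hf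
    refine ⟨s, hs, countVec_injective ?_⟩
    rw [hsum, map_sum]
    exact Finset.sum_congr rfl fun i _ ↦ (hsf i).symm
  · rintro ⟨s, hs, rfl⟩
    exact ⟨fun i ↦ countVec (s i), fun i ↦ ⟨s i, hs i, rfl⟩, map_sum ..⟩

theorem mem_dil_of_decomposesIn {N : ℕ} {P : Set (Pt N)} (hP : Convex ℝ P) {α : Pt N}
    (hk : 0 < k) (hα : DecomposesIn P k α) : α ∈ dil k P := by
  obtain ⟨f, hf, rfl⟩ := hα
  have hk' : (k : ℝ) ≠ 0 := mod_cast hk.ne'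
  rw [dil, Set.mem_smul_set_iff_inv_smul_mem₀ hk', Finset.smul_sum]
  exact hP.sum_mem (fun _ _ ↦ by positivity) (by simp [hk']) fun i _ ↦ (hf i).1

theorem countVec_mem_dil_edgePolytope (hk : 0 < k) {m : Multiset (Fin d)}
    (hm : m ∈ closedWalkMonoid G) (hcard : m.card = 2 * k) :
    countVec m ∈ dil k (edgePolytope G) := by
  have hdouble : countVec (2 • m) ∈ dil (2 * k) (edgePolytope G) :=
    mem_dil_of_decomposesIn (convex_convexHull ℝ _) (by positivity)
      (decomposesIn_edgePolytope_iff.2 ⟨two_nsmul_mem_edgeMonoid hm, by simp [hcard]⟩)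
  rw [map_nsmul, ← Nat.cast_smul_eq_nsmul ℝ, dil, Nat.cast_mul, mul_smul] at hdouble
  exact (Set.smul_mem_smul_set_iff₀ (by norm_num) _ _).1 hdouble

theorem latPts_dil_edgePolytope (hk : 0 < k) (G : SimpleGraph (Fin d)) :
    latPts (dil k (edgePolytope G)) =
      countVec '' {m | m ∈ closedWalkMonoid G ∧ m.card = 2 * k} := by
  refine Set.Subset.antisymm (fun x hx ↦ ?_) ?_
  · obtain ⟨m, rfl, hcard, hhall⟩ := exists_hallCondition_of_mem_latPts_dil hx
    exact ⟨m, ⟨mem_closedWalkMonoid_of_hallCondition hhall, hcard⟩, rfl⟩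
  · rintro _ ⟨m, ⟨hm, hcard⟩, rfl⟩
    exact ⟨countVec_mem_dil_edgePolytope hk hm hcard, isLat_countVec m⟩

theorem hasIDP_edgePolytope_iff_mem_edgeMonoid :
    HasIDP (edgePolytope G) ↔ ∀ m ∈ closedWalkMonoid G, Even m.card → m ∈ edgeMonoid G := by
  constructor
  · intro h m hm heven
    obtain ⟨k, hk⟩ := even_iff_two_dvd.1 heven
    rcases k.eq_zero_or_pos with rfl | hpos
    · rw [mul_zero, Multiset.card_eq_zero] at hk
      exact hk ▸ zero_mem _
    · have hlat : countVec m ∈ latPts (dil k (edgePolytope G)) := by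
        rw [latPts_dil_edgePolytope hpos]
        exact ⟨m, ⟨hm, hk⟩, rfl⟩
      exact (decomposesIn_edgePolytope_iff.1 (h k hpos _ hlat)).1
  · intro h k hpos α hα
    rw [latPts_dil_edgePolytope hpos] at hα
    obtain ⟨m, ⟨hm, hk⟩, rfl⟩ := hα
    exact decomposesIn_edgePolytope_iff.2 ⟨h m hm (hk ▸ even_two_mul k), hk⟩

end EdgePolytope

theorem edgePolytope_idp_iff_oddCycleCondition_general {d : ℕ} (G : SimpleGraph (Fin d)) :
    HasIDP (edgePolytope G) ↔ OddCycleCondition G :=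
  hasIDP_edgePolytope_iff_mem_edgeMonoid.trans oddCycleCondition_iff_mem_edgeMonoid.symm

/-- the edge polytope of a connected simple graph `G` possesses (IDP)
if and only if `G` satisfies the odd cycle condition. -/
theorem edgePolytope_idp_iff_oddCycleCondition {d : ℕ} (G : SimpleGraph (Fin d))
    (hconn : G.Connected) :
    HasIDP (edgePolytope G) ↔ OddCycleCondition G :=
  edgePolytope_idp_iff_oddCycleCondition_general G
end
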